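/- arXiv:math-ph/0302049 — 3 statements merged into one kernel-verified Lean document; each statement's English description precedes it below -/
import Mathlib

section
/- Pointwise autocorrelation coefficients: under the dense cut-and-project hypotheses, with f : ℝ^m → ℂ continuous and |x|^{m+1+α}|f(x)| ≤ C, for every z ∈ L the finite autocorrelation coefficients η_n(z) = (1/vol(B_n)) ∑_{x,y ∈ L ∩ B_n, x−y=z} f(x*) conj(f(y*)) converge as n → ∞ to η(z) = (1/|det(L̃)|) ∫_{ℝ^m} f(u) conj(f(u − z*)) du. -/
open MeasureTheory Metric

/-- The projection of the lattice to direct space. -/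
def physL (d m : ℕ) (L : Submodule ℤ (EuclideanSpace ℝ (Fin d) × EuclideanSpace ℝ (Fin m))) :
    Set (EuclideanSpace ℝ (Fin d)) :=
  Prod.fst '' (L : Set (EuclideanSpace ℝ (Fin d) × EuclideanSpace ℝ (Fin m)))


section Helpers

variable {E F : Type*} [NormedAddCommGroup E] [NormedSpace ℝ E] [FiniteDimensional ℝ E]
  [MeasureSpace E] [BorelSpace E] [(volume : Measure E).IsAddHaarMeasure]
  [NormedAddCommGroup F] [NormedSpace ℝ F] [FiniteDimensional ℝ F]
  [MeasureSpace F] [BorelSpace F] [(volume : Measure F).IsAddHaarMeasure]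

theorem haar_prod : (volume : Measure (E × F)).IsAddHaarMeasure :=
  inferInstanceAs ((volume : Measure E).prod (volume : Measure F)).IsAddHaarMeasure

theorem trans_bound_lint (L : Submodule ℤ (E × F)) [DiscreteTopology L] [IsZLattice ℝ L]
    (D : Set (E × F)) (hD : IsAddFundamentalDomain L D volume) (hDm : MeasurableSet D) (R : ℝ)
    (hR : ∀ x ∈ D, ‖x‖ ≤ R) (w : F → ENNReal) (hw : Measurable w) (c : ENNReal)
    (hc : ∀ u v, ‖v‖ ≤ R → w u ≤ c * w (u + v)) (A A' : Set E) (hA' : MeasurableSet A')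
    (hAA' : ∀ a ∈ A, ∀ x, ‖x‖ ≤ R → a + x ∈ A') (t : F) :
    volume D * ∑' p : L, A.indicator (fun _ => w (p.1.2 + t)) p.1.1 ≤
      c * (volume A' * ∫⁻ u, w u) := by
  have := haar_prod (E := E) (F := F)
  have : MeasurableVAdd L (E × F) := (inferInstance : MeasurableVAdd L.toAddSubgroup (E × F))
  have : VAddInvariantMeasure L (E × F) volume :=
    (inferInstance : VAddInvariantMeasure L.toAddSubgroup (E × F) volume)
  have key := hD.lintegral_eq_tsum''
    (fun x : E × F => c * (A'.indicator 1 x.1 * w (x.2 + t)))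
  have hI : ∫⁻ x : E × F, c * (A'.indicator 1 x.1 * w (x.2 + t)) =
      c * (volume A' * ∫⁻ u, w u) := by
    rw [lintegral_const_mul]
    · congr 1
      rw [Measure.volume_eq_prod, lintegral_prod_mul (f := A'.indicator 1) (g := fun u => w (u + t)),
        lintegral_add_right_eq_self w t, lintegral_indicator_one hA']
      · exact (measurable_one.indicator hA').aemeasurable
      · exact (hw.comp (measurable_add_const t)).aemeasurable
    · exact ((measurable_one.indicator hA').comp measurable_fst).mul
        (hw.comp (measurable_snd.add_const t))
  rw [← hI, key, ← ENNReal.tsum_mul_left]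
  refine ENNReal.tsum_le_tsum fun p => ?_
  rw [mul_comm, ← setLIntegral_const]
  refine setLIntegral_mono' hDm fun x hx => ?_
  have hx1 : ‖x.1‖ ≤ R := (norm_fst_le x).trans (hR x hx)
  have hx2 : ‖x.2‖ ≤ R := (norm_snd_le x).trans (hR x hx)
  have e : p +ᵥ x = p.1 + x := rfl
  by_cases h : p.1.1 ∈ A
  · have h' := hAA' _ h _ hx1
    simp only [e, Set.indicator_of_mem h, Prod.fst_add, Prod.snd_add, Set.indicator_of_mem h',
      Pi.one_apply, one_mul]
    refine (hc _ _ hx2).trans (le_of_eq ?_)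
    congr 2; abel
  · simp [Set.indicator_of_notMem h]

theorem wt_pos {G : Type*} [NormedAddCommGroup G] (r : ℝ) (u : G) : 0 < (1 + ‖u‖) ^ (-r) := by
  positivity

theorem wt_shift {G : Type*} [NormedAddCommGroup G] (r : ℝ) (hr : 0 ≤ r) (R : ℝ) (hR : 0 ≤ R)
    (u v : G) (hv : ‖v‖ ≤ R) :
    (1 + ‖u‖) ^ (-r) ≤ (1 + R) ^ r * (1 + ‖u + v‖) ^ (-r) := by
  have h1 : 1 + ‖u + v‖ ≤ (1 + R) * (1 + ‖u‖) := by
    have := norm_add_le u v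
    nlinarith [norm_nonneg u]
  have h2 : (1 + ‖u + v‖) ^ r ≤ (1 + R) ^ r * (1 + ‖u‖) ^ r := by
    rw [← Real.mul_rpow (by positivity) (by positivity)]
    exact Real.rpow_le_rpow (by positivity) h1 hr
  rw [Real.rpow_neg (by positivity), Real.rpow_neg (by positivity), ← div_eq_mul_inv,
    le_div_iff₀ (by positivity), inv_mul_le_iff₀ (by positivity)]
  linarith

theorem trans_bound (L : Submodule ℤ (E × F)) [DiscreteTopology L] [IsZLattice ℝ L]
    (D : Set (E × F)) (hD : IsAddFundamentalDomain L D volume) (hDm : MeasurableSet D)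
    (hD0 : volume D ≠ 0) (hDtop : volume D ≠ ⊤) (R : ℝ) (hR0 : 0 ≤ R)
    (hR : ∀ x ∈ D, ‖x‖ ≤ R) (r : ℝ) (hr : (Module.finrank ℝ F : ℝ) < r) :
    ∃ K : ℝ, 0 ≤ K ∧ ∀ (A A' : Set E), MeasurableSet A' → volume A' ≠ ⊤ →
      (∀ a ∈ A, ∀ x, ‖x‖ ≤ R → a + x ∈ A') → ∀ (t : F) (a : L → ℂ) (c : ℝ), 0 ≤ c →
      (∀ p, ‖a p‖ ≤ A.indicator (fun _ => c * (1 + ‖p.1.2 + t‖) ^ (-r)) p.1.1) →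
      Summable a ∧ ‖∑' p, a p‖ ≤ c * K * volume.real A' := by
  have hr0 : 0 ≤ r := (Nat.cast_nonneg _).trans hr.le
  set w : F → ENNReal := fun u => ENNReal.ofReal ((1 + ‖u‖) ^ (-r)) with hw
  have hwm : Measurable w := by
    refine ENNReal.measurable_ofReal.comp ?_
    exact (measurable_const.add measurable_norm).pow_const _
  have hwI : ∫⁻ u, w u ≠ ⊤ := (finite_integral_one_add_norm (μ := volume) hr).ne
  set c₁ : ENNReal := ENNReal.ofReal ((1 + R) ^ r) with hc₁
  have hcw : ∀ u v : F, ‖v‖ ≤ R → w u ≤ c₁ * w (u + v) := fun u v hv => by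
    rw [hw, hc₁, ← ENNReal.ofReal_mul (by positivity)]
    exact ENNReal.ofReal_le_ofReal (wt_shift r hr0 R hR0 u v hv)
  set K' : ENNReal := (volume D)⁻¹ * (c₁ * ∫⁻ u, w u) with hK'
  have hK'top : K' ≠ ⊤ :=
    ENNReal.mul_ne_top (ENNReal.inv_ne_top.2 hD0) (ENNReal.mul_ne_top ENNReal.ofReal_ne_top hwI)
  refine ⟨K'.toReal, ENNReal.toReal_nonneg, fun A A' hA' hA't hAA' t a c hc0 ha => ?_⟩
  have h1 := trans_bound_lint L D hD hDm R hR w hwm c₁ hcw A A' hA' hAA' t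
  have h2 : ∑' p : L, A.indicator (fun _ => w (p.1.2 + t)) p.1.1 ≤ K' * volume A' := by
    calc _ = (volume D)⁻¹ * (volume D * ∑' p : L, A.indicator (fun _ => w (p.1.2 + t)) p.1.1) := by
          rw [← mul_assoc, ENNReal.inv_mul_cancel hD0 hDtop, one_mul]
      _ ≤ (volume D)⁻¹ * (c₁ * (volume A' * ∫⁻ u, w u)) := by gcongr
      _ = _ := by rw [hK']; ring
  have h3 : ∑' p : L, ‖a p‖ₑ ≤ ENNReal.ofReal c * (K' * volume A') := by
    refine le_trans ?_ (mul_le_mul_right h2 _)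
    rw [← ENNReal.tsum_mul_left]
    refine ENNReal.tsum_le_tsum fun p => ?_
    rw [← ofReal_norm]
    refine (ENNReal.ofReal_le_ofReal (ha p)).trans (le_of_eq ?_)
    by_cases h : p.1.1 ∈ A
    · simp only [Set.indicator_of_mem h, hw]
      rw [ENNReal.ofReal_mul hc0]
    · simp [Set.indicator_of_notMem h]
  have h4 : ENNReal.ofReal c * (K' * volume A') ≠ ⊤ :=
    ENNReal.mul_ne_top ENNReal.ofReal_ne_top (ENNReal.mul_ne_top hK'top hA't)
  have h5 : ∑' p : L, ‖a p‖ₑ ≠ ⊤ := ne_top_of_le_ne_top h4 h3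
  have hs : Summable fun p => ‖a p‖ := by
    have := ENNReal.summable_toReal h5
    simpa using this
  refine ⟨hs.of_norm, (norm_tsum_le_tsum_norm hs).trans ?_⟩
  have h6 : ∑' p, ‖a p‖ = (∑' p : L, ‖a p‖ₑ).toReal := by
    rw [ENNReal.tsum_toReal_eq (fun p => by simp)]
    simp
  rw [h6]
  refine (ENNReal.toReal_mono h4 h3).trans (le_of_eq ?_)
  rw [ENNReal.toReal_mul, ENNReal.toReal_mul, ENNReal.toReal_ofReal hc0, measureReal_def]
  ring

open Filter Topology in
theorem vol_ratio (c : ℝ) : Tendsto (fun n : ℕ =>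
    (volume.real (closedBall (0 : E) n))⁻¹ * volume.real (closedBall (0 : E) (n + c)))
    atTop (𝓝 1) := by
  have h1 : Tendsto (fun n : ℕ => (1 + c / (n : ℝ)) ^ Module.finrank ℝ E) atTop (𝓝 1) := by
    have : Tendsto (fun n : ℕ => (1 + c / (n : ℝ))) atTop (𝓝 (1 + 0)) :=
      tendsto_const_nhds.add (tendsto_const_div_atTop_nhds_zero_nat c)
    simpa using this.pow (Module.finrank ℝ E)
  refine h1.congr' ?_
  have h2 : ∀ᶠ n : ℕ in atTop, 0 ≤ (n : ℝ) + c :=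
    (tendsto_atTop_add_const_right _ c tendsto_natCast_atTop_atTop).eventually_ge_atTop 0
  filter_upwards [h2, eventually_gt_atTop 0] with n hn hn0
  have hn1 : (0 : ℝ) < n := by exact_mod_cast hn0
  rw [Measure.addHaar_real_closedBall volume _ hn, Measure.addHaar_real_closedBall volume _ hn1.le]
  have hb : 0 < volume.real (ball (0 : E) 1) :=
    ENNReal.toReal_pos (measure_ball_pos _ _ one_pos).ne' measure_ball_lt_top.ne
  have : 1 + c / (n : ℝ) = (n + c) / n := by field_simp
  rw [this, div_pow]
  field_simp

open Filter Topology in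
theorem vol_annulus (c : ℝ) (hc : 0 ≤ c) : Tendsto (fun n : ℕ =>
    (volume.real (closedBall (0 : E) n))⁻¹ *
      volume.real (closedBall (0 : E) (n + c) \ closedBall (0 : E) (n - c)))
    atTop (𝓝 0) := by
  have h := (vol_ratio (E := E) c).sub (vol_ratio (E := E) (-c))
  rw [sub_self] at h
  refine h.congr fun n => ?_
  rw [measureReal_sdiff (closedBall_subset_closedBall (by linarith)) measurableSet_closedBall
    measure_closedBall_lt_top.ne, ← sub_eq_add_neg]
  ring

theorem osc_bound {G : Type*} [NormedAddCommGroup G] [ProperSpace G] (g : G → ℂ)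
    (hg : Continuous g) (C r r' : ℝ) (hC : 0 ≤ C) (hr : 0 ≤ r) (hrr : r < r')
    (hgb : ∀ u, ‖g u‖ ≤ C * (1 + ‖u‖) ^ (-r')) (ε : ℝ) (hε : 0 < ε) :
    ∃ δ > 0, ∀ u v : G, ‖v‖ < δ → ‖g (u + v) - g u‖ ≤ ε * (1 + ‖u‖) ^ (-r) := by
  have hr' : 0 ≤ r' := hr.trans hrr.le
  -- far away
  obtain ⟨ρ, hρ0, hρ⟩ : ∃ ρ : ℝ, 0 ≤ ρ ∧ ∀ x : ℝ, ρ ≤ x →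
      C * (1 + 2 ^ r') * (1 + x) ^ (-(r' - r)) ≤ ε := by
    have h1 : Filter.Tendsto (fun x : ℝ => C * (1 + 2 ^ r') * (1 + x) ^ (-(r' - r)))
        Filter.atTop (nhds (C * (1 + 2 ^ r') * 0)) := by
      refine Filter.Tendsto.const_mul _ ?_
      exact (tendsto_rpow_neg_atTop (sub_pos.2 hrr)).comp
        (Filter.tendsto_atTop_add_const_left _ 1 Filter.tendsto_id)
    rw [mul_zero] at h1
    obtain ⟨ρ, hρ⟩ := Filter.eventually_atTop.1 (h1.eventually_le_const hε)
    exact ⟨max ρ 0, le_max_right _ _, fun x hx => hρ x ((le_max_left _ _).trans hx)⟩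
  have hK : IsCompact (closedBall (0 : G) (ρ + 1)) := isCompact_closedBall _ _
  have hu := hK.uniformContinuousOn_of_continuous hg.continuousOn
  rw [Metric.uniformContinuousOn_iff] at hu
  obtain ⟨δ, hδ, hu⟩ := hu (ε * (1 + ρ) ^ (-r)) (by positivity)
  refine ⟨min δ 1, by positivity, fun u v hv => ?_⟩
  have hv1 : ‖v‖ ≤ 1 := hv.le.trans (min_le_right _ _)
  rcases le_total ρ ‖u‖ with h | h
  · have h1 : ‖g (u + v)‖ ≤ C * (2 ^ r' * (1 + ‖u‖) ^ (-r')) := by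
      refine (hgb _).trans (mul_le_mul_of_nonneg_left ?_ hC)
      have := wt_shift r' hr' 1 zero_le_one (u + v) (-v) (by simpa using hv1)
      norm_num at this
      exact this
    have h2 : (1 + ‖u‖) ^ (-r') = (1 + ‖u‖) ^ (-(r' - r)) * (1 + ‖u‖) ^ (-r) := by
      rw [← Real.rpow_add (by positivity)]; congr 1; ring
    calc ‖g (u + v) - g u‖ ≤ ‖g (u + v)‖ + ‖g u‖ := norm_sub_le _ _
      _ ≤ C * (2 ^ r' * (1 + ‖u‖) ^ (-r')) + C * (1 + ‖u‖) ^ (-r') := add_le_add h1 (hgb u)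
      _ = C * (1 + 2 ^ r') * (1 + ‖u‖) ^ (-(r' - r)) * (1 + ‖u‖) ^ (-r) := by rw [h2]; ring
      _ ≤ _ := mul_le_mul_of_nonneg_right (hρ _ h) (by positivity)
  · have h1 := hu (u + v) (by
      rw [mem_closedBall_zero_iff]; exact (norm_add_le _ _).trans (add_le_add h hv1)) u (by
      rw [mem_closedBall_zero_iff]; linarith) (by
      rw [dist_eq_norm, add_sub_cancel_left]; exact hv.trans_le (min_le_left _ _))
    rw [dist_eq_norm] at h1
    refine h1.le.trans (mul_le_mul_of_nonneg_left ?_ hε.le)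
    exact Real.rpow_le_rpow_of_nonpos (by positivity) (by linarith) (by linarith)

open Filter Topology in
theorem equidist (L : Submodule ℤ (E × F)) [DiscreteTopology L] [IsZLattice ℝ L]
    (hdense : Dense (Prod.snd '' (L : Set (E × F)))) (g : F → ℂ) (hg : Continuous g)
    (C r r' : ℝ) (hC : 0 ≤ C) (hr : (Module.finrank ℝ F : ℝ) < r) (hrr : r < r')
    (hgb : ∀ u, ‖g u‖ ≤ C * (1 + ‖u‖) ^ (-r')) (A : ℕ → Set E) (hA : ∀ n, MeasurableSet (A n))
    (c₀ : ℝ) (hc₀ : 0 ≤ c₀) (hA1 : ∀ n : ℕ, closedBall 0 (n - c₀) ⊆ A n)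
    (hA2 : ∀ n : ℕ, A n ⊆ closedBall 0 n) :
    Tendsto (fun n : ℕ => (volume.real (closedBall (0 : E) n))⁻¹ •
      ∑' p : L, (A n).indicator (fun _ => g p.1.2) p.1.1) atTop
      (𝓝 ((ZLattice.covolume L volume)⁻¹ • ∫ u, g u)) := by
  have := haar_prod (E := E) (F := F)
  have : MeasurableVAdd L (E × F) := (inferInstance : MeasurableVAdd L.toAddSubgroup (E × F))
  have : VAddInvariantMeasure L (E × F) volume :=
    (inferInstance : VAddInvariantMeasure L.toAddSubgroup (E × F) volume)
  have hr0 : 0 ≤ r := (Nat.cast_nonneg _).trans hr.le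
  -- the fundamental domain
  obtain ⟨D, hD, hDm, hDb⟩ : ∃ D : Set (E × F), IsAddFundamentalDomain L D volume ∧
      MeasurableSet D ∧ Bornology.IsBounded D :=
    ⟨_, ZLattice.isAddFundamentalDomain (Module.Free.chooseBasis ℤ L) volume,
      ZSpan.fundamentalDomain_measurableSet _, ZSpan.fundamentalDomain_isBounded _⟩
  have hcov := ZLattice.covolume_eq_measure_fundamentalDomain L volume hD
  have hcov0 := ZLattice.covolume_ne_zero L volume
  have hDtop : volume D ≠ ⊤ := hDb.measure_lt_top.ne
  have hD0 : volume D ≠ 0 := fun h => hcov0 (by rw [hcov, measureReal_def, h]; rfl)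
  obtain ⟨R, hR0, hR⟩ : ∃ R : ℝ, 0 ≤ R ∧ ∀ x ∈ D, ‖x‖ ≤ R := by
    obtain ⟨R, hR⟩ := hDb.exists_norm_le
    exact ⟨max R 0, le_max_right _ _, fun x hx => (hR x hx).trans (le_max_left _ _)⟩
  obtain ⟨K, hK0, hK⟩ := trans_bound L D hD hDm hD0 hDtop R hR0 hR r hr
  have hgr : ∀ u, ‖g u‖ ≤ C * (1 + ‖u‖) ^ (-r) := fun u => (hgb u).trans
    (mul_le_mul_of_nonneg_left (Real.rpow_le_rpow_of_exponent_le
      (by linarith [norm_nonneg u]) (by linarith)) hC)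
  set b : ℕ → ℝ := fun n => volume.real (closedBall (0 : E) n) with hb
  have hb0 : ∀ n, 0 ≤ b n := fun n => measureReal_nonneg
  let T : ℕ → E × F → L → ℂ := fun n x p =>
    (A n).indicator (fun _ => g (p.1.2 + x.2)) (p.1.1 + x.1)
  let S : ℕ → E × F → ℂ := fun n x => ∑' p, T n x p
  have hbd : ∀ n x, Summable (T n x) ∧
      ‖S n x‖ ≤ C * K * volume.real (closedBall (0 : E) (n + (‖x.1‖ + R))) := by
    intro n x
    refine hK (closedBall 0 (n + ‖x.1‖)) _ measurableSet_closedBall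
      measure_closedBall_lt_top.ne ?_ x.2 _ C hC ?_
    · intro a ha y hy
      rw [mem_closedBall_zero_iff] at ha ⊢
      linarith [norm_add_le a y]
    · intro p
      by_cases h : p.1.1 + x.1 ∈ A n
      · have h1 := hA2 n h
        rw [mem_closedBall_zero_iff] at h1
        have h2 : p.1.1 ∈ closedBall (0 : E) (n + ‖x.1‖) := by
          rw [mem_closedBall_zero_iff]
          have := norm_sub_le (p.1.1 + x.1) x.1
          rw [add_sub_cancel_right] at this
          linarith
        simp only [T, Set.indicator_of_mem h, Set.indicator_of_mem h2]
        exact hgr _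
      · simp only [T, Set.indicator_of_notMem h, norm_zero]
        exact Set.indicator_nonneg (fun _ _ => by positivity) _
  have hper : ∀ n x, ∀ q ∈ L, S n (x + q) = S n x := by
    intro n x q hq
    simp only [S]
    rw [← (Equiv.addRight (⟨q, hq⟩ : L)).tsum_eq (T n x)]
    refine tsum_congr fun p => ?_
    simp only [T, Equiv.coe_addRight, Submodule.coe_add, Prod.fst_add, Prod.snd_add]
    have e1 : p.1.1 + (x.1 + q.1) = p.1.1 + q.1 + x.1 := by abel
    have e2 : p.1.2 + (x.2 + q.2) = p.1.2 + q.2 + x.2 := by abel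
    rw [e1, e2]
  have hd1 : ∀ (n : ℕ) (s : E), ‖S n (s, 0) - S n 0‖ ≤ C * K *
      volume.real (closedBall (0 : E) (n + (c₀ + ‖s‖ + R)) \
        closedBall (0 : E) (n - (c₀ + ‖s‖ + R))) := by
    intro n s
    have e : S n (s, 0) - S n 0 = ∑' p, (T n (s, 0) p - T n 0 p) :=
      ((hbd n (s, 0)).1.tsum_sub (hbd n 0).1).symm
    rw [e]
    refine (hK (closedBall (0 : E) (n + (c₀ + ‖s‖)) \ closedBall (0 : E) (n - (c₀ + ‖s‖))) _
      (measurableSet_closedBall.diff measurableSet_closedBall)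
      (ne_top_of_le_ne_top measure_closedBall_lt_top.ne (measure_mono Set.sdiff_subset))
      ?_ 0 _ C hC ?_).2
    · rintro a ⟨ha1, ha2⟩ y hy
      rw [mem_closedBall_zero_iff] at ha1 ha2
      refine ⟨?_, ?_⟩
      · rw [mem_closedBall_zero_iff]
        linarith [norm_add_le a y]
      · rw [mem_closedBall_zero_iff]
        have := norm_sub_le (a + y) y
        rw [add_sub_cancel_right] at this
        linarith
    · intro p
      simp only [T, Prod.fst_zero, Prod.snd_zero, add_zero]
      by_cases h : p.1.1 ∈ closedBall (0 : E) (n + (c₀ + ‖s‖)) \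
          closedBall (0 : E) (n - (c₀ + ‖s‖))
      · rw [Set.indicator_of_mem h]
        by_cases h1 : p.1.1 + s ∈ A n <;> by_cases h2 : p.1.1 ∈ A n <;>
          simp only [Set.indicator_of_mem, Set.indicator_of_notMem, h1, h2, not_false_eq_true,
            sub_self, sub_zero, zero_sub, norm_neg, norm_zero]
        · positivity
        · exact hgr _
        · exact hgr _
        · positivity
      · rw [Set.indicator_of_notMem h]
        by_cases h3 : p.1.1 ∈ closedBall (0 : E) (n - (c₀ + ‖s‖))
        · rw [mem_closedBall_zero_iff] at h3
          have h1 : p.1.1 + s ∈ A n := hA1 n (by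
            rw [mem_closedBall_zero_iff]; linarith [norm_add_le p.1.1 s])
          have h2 : p.1.1 ∈ A n := hA1 n (by
            rw [mem_closedBall_zero_iff]; linarith [norm_nonneg s])
          simp [h1, h2]
        · have h4 : ¬ ‖p.1.1‖ ≤ n + (c₀ + ‖s‖) := fun h5 =>
            h ⟨by rwa [mem_closedBall_zero_iff], h3⟩
          have h1 : p.1.1 + s ∉ A n := fun h5 => by
            have h6 := hA2 n h5
            rw [mem_closedBall_zero_iff] at h6
            have := norm_sub_le (p.1.1 + s) s
            rw [add_sub_cancel_right] at this
            linarith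
          have h2 : p.1.1 ∉ A n := fun h5 => by
            have h6 := hA2 n h5
            rw [mem_closedBall_zero_iff] at h6
            linarith [norm_nonneg s]
          simp [h1, h2]
  have hd2 : ∀ ε > 0, ∃ δ > 0, ∀ (n : ℕ) (s : E) (t t' : F), ‖t' - t‖ < δ →
      ‖S n (s, t') - S n (s, t)‖ ≤
        ε * K * volume.real (closedBall (0 : E) (n + (‖s‖ + R))) := by
    intro ε hε
    obtain ⟨δ, hδ, h⟩ := osc_bound g hg C r r' hC hr0 hrr hgb ε hε
    refine ⟨δ, hδ, fun n s t t' htt => ?_⟩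
    have e : S n (s, t') - S n (s, t) = ∑' p, (T n (s, t') p - T n (s, t) p) :=
      ((hbd n (s, t')).1.tsum_sub (hbd n (s, t)).1).symm
    rw [e]
    refine (hK (closedBall 0 (n + ‖s‖)) _ measurableSet_closedBall
      measure_closedBall_lt_top.ne ?_ t _ ε hε.le ?_).2
    · intro a ha y hy
      rw [mem_closedBall_zero_iff] at ha ⊢
      linarith [norm_add_le a y]
    · intro p
      by_cases h1 : p.1.1 + s ∈ A n
      · have h2 := hA2 n h1
        rw [mem_closedBall_zero_iff] at h2
        have h3 : p.1.1 ∈ closedBall (0 : E) (n + ‖s‖) := by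
          rw [mem_closedBall_zero_iff]
          have := norm_sub_le (p.1.1 + s) s
          rw [add_sub_cancel_right] at this
          linarith
        simp only [T, Set.indicator_of_mem h1, Set.indicator_of_mem h3]
        have := h (p.1.2 + t) (t' - t) htt
        rwa [add_assoc, add_sub_cancel] at this
      · simp only [T, Set.indicator_of_notMem h1, sub_self, norm_zero]
        exact Set.indicator_nonneg (fun _ _ => by positivity) _
  have hconv : ∀ x, Tendsto (fun n => (b n)⁻¹ • (S n x - S n 0)) atTop (𝓝 0) := by
    intro x
    rw [Metric.tendsto_nhds]
    intro ε hε
    obtain ⟨δ, hδ, h⟩ := hd2 (ε / (2 * (K + 1))) (by positivity)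
    obtain ⟨y, hy, ⟨q, hq, rfl⟩⟩ := Metric.dense_iff.1 hdense x.2 δ hδ
    rw [mem_ball, dist_comm, dist_eq_norm] at hy
    have hlim := ((vol_ratio (E := E) (‖x.1‖ + R)).const_mul (ε / (2 * (K + 1)) * K)).add
      ((vol_annulus (E := E) (c₀ + ‖x.1 - q.1‖ + R) (by positivity)).const_mul (C * K))
    have hlt : ε / (2 * (K + 1)) * K * 1 + C * K * 0 < ε := by
      have : ε / (2 * (K + 1)) * K * 1 + C * K * 0 = ε * (K / (2 * (K + 1))) := by
        field_simp; ring
      rw [this]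
      have : K / (2 * (K + 1)) < 1 := by
        rw [div_lt_one (by positivity)]; linarith
      nlinarith
    filter_upwards [hlim.eventually_lt_const hlt] with n hn
    rw [dist_zero_right, norm_smul, norm_inv, Real.norm_of_nonneg (hb0 n)]
    refine lt_of_le_of_lt ?_ hn
    have e1 : S n (x.1, q.2) = S n (x.1 - q.1, 0) := by
      rw [← hper n (x.1 - q.1, 0) q hq]
      congr 1
      ext <;> simp
    have e2 : S n x - S n 0 = (S n (x.1, x.2) - S n (x.1, q.2)) +
        (S n (x.1 - q.1, 0) - S n 0) := by rw [e1]; ring_nf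
    have h1 := h n x.1 q.2 x.2 hy
    have h2 := hd1 n (x.1 - q.1)
    calc (b n)⁻¹ * ‖S n x - S n 0‖ ≤ (b n)⁻¹ * (_ + _) := by
          rw [e2]
          exact mul_le_mul_of_nonneg_left ((norm_add_le _ _).trans (add_le_add h1 h2))
            (inv_nonneg.2 (hb0 n))
      _ = _ := by simp only [hb]; ring
  -- integration
  have hgi : Integrable g := by
    refine ((integrable_one_add_norm (μ := volume) hr).const_mul C).mono'
      hg.aestronglyMeasurable (Eventually.of_forall hgr)
  have hAtop : ∀ n, volume (A n) ≠ ⊤ := fun n =>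
    ne_top_of_le_ne_top measure_closedBall_lt_top.ne (measure_mono (hA2 n))
  let Φ : ℕ → E × F → ℂ := fun n x => (A n).indicator 1 x.1 * g x.2
  have hΦ : ∀ n, Integrable (Φ n) := fun n => by
    refine Integrable.mul_prod (f := (A n).indicator (1 : E → ℂ)) ?_ hgi
    exact (integrable_indicator_iff (hA n)).2 (integrableOn_const (hAtop n))
  have hTΦ : ∀ n x (p : L), T n x p = Φ n (p +ᵥ x) := by
    intro n x p
    have e : p +ᵥ x = p.1 + x := rfl
    by_cases h : p.1.1 + x.1 ∈ A n <;> simp [T, Φ, e, h]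
  have hTm : ∀ n (p : L), AEStronglyMeasurable (fun x => T n x p) (volume.restrict D) := by
    intro n p
    have : (fun x => T n x p) = fun x => (A n).indicator 1 (p.1.1 + x.1) * g (p.1.2 + x.2) := by
      funext x
      by_cases h : p.1.1 + x.1 ∈ A n <;> simp [T, h]
    rw [this]
    refine Measurable.aestronglyMeasurable ?_
    refine Measurable.mul ?_ ?_
    · exact (measurable_one.indicator (hA n)).comp (measurable_fst.const_add _)
    · exact hg.measurable.comp (measurable_snd.const_add _)
  have hSm : ∀ n, AEStronglyMeasurable (S n) (volume.restrict D) := by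
    intro n
    refine aestronglyMeasurable_of_tendsto_ae (u := (atTop : Filter (Finset L)))
      (f := fun s x => ∑ p ∈ s, T n x p) ?_ ?_
    · intro s
      exact Finset.aestronglyMeasurable_fun_sum s fun p _ => hTm n p
    · exact Eventually.of_forall fun x => (hbd n x).1.hasSum
  have hint : ∀ n, ∫ x in D, S n x = volume.real (A n) • ∫ u, g u := by
    intro n
    rw [integral_tsum (hTm n)]
    · simp only [hTΦ]
      rw [← hD.integral_eq_tsum'' (Φ n) (hΦ n), Measure.volume_eq_prod,
        integral_prod_mul (f := (A n).indicator (1 : E → ℂ)) (g := g)]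
      have : ∫ x : E, (A n).indicator (1 : E → ℂ) x = volume.real (A n) := by
        rw [integral_indicator (hA n)]
        simp
      rw [this, Complex.real_smul]
    · simp only [hTΦ]
      rw [← hD.lintegral_eq_tsum'' (fun x => ‖Φ n x‖ₑ)]
      exact (hΦ n).2.ne
  have hJ : Tendsto (fun n => ∫ x in D, (b n)⁻¹ • (S n x - S n 0)) atTop (𝓝 0) := by
    have : Tendsto (fun n => ∫ x in D, (b n)⁻¹ • (S n x - S n 0)) atTop
        (𝓝 (∫ _x in D, (0 : ℂ))) := by
      refine tendsto_integral_filter_of_dominated_convergence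
        (fun _ => 2 * (C * K) * 2) ?_ ?_ ?_ ?_
      · exact Eventually.of_forall fun n =>
          AEStronglyMeasurable.fun_const_smul
            (AEStronglyMeasurable.fun_sub (hSm n) aestronglyMeasurable_const) _
      · have h1 := (vol_ratio (E := E) (R + R)).eventually_le_const (one_lt_two)
        filter_upwards [h1] with n hn
        refine (ae_restrict_iff' hDm).2 (Eventually.of_forall fun x hx => ?_)
        have hx1 : ‖x.1‖ ≤ R := (norm_fst_le x).trans (hR x hx)
        have h2 : ∀ y : E × F, ‖y.1‖ ≤ R →
            ‖S n y‖ ≤ C * K * volume.real (closedBall (0 : E) (n + (R + R))) := fun y hy => by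
          refine (hbd n y).2.trans (mul_le_mul_of_nonneg_left ?_ (by positivity))
          exact measureReal_mono (closedBall_subset_closedBall (by linarith))
            measure_closedBall_lt_top.ne
        have h3 := h2 x hx1
        have h4 := h2 0 (by simpa using hR0)
        rw [norm_smul, norm_inv, Real.norm_of_nonneg (hb0 n)]
        calc (b n)⁻¹ * ‖S n x - S n 0‖
            ≤ (b n)⁻¹ * (2 * (C * K) * volume.real (closedBall (0 : E) (n + (R + R)))) := by
              refine mul_le_mul_of_nonneg_left ?_ (inv_nonneg.2 (hb0 n))
              linarith [norm_sub_le (S n x) (S n 0)]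
          _ = 2 * (C * K) *
              ((b n)⁻¹ * volume.real (closedBall (0 : E) (n + (R + R)))) := by ring
          _ ≤ _ := mul_le_mul_of_nonneg_left hn (by positivity)
      · exact integrableOn_const hDtop
      · exact Eventually.of_forall fun x => hconv x
    simpa using this
  have hSi : ∀ n, IntegrableOn (S n) D := by
    intro n
    refine Integrable.mono' (g := fun _ => C * K * volume.real (closedBall (0 : E) (n + (R + R))))
      (integrableOn_const hDtop) (hSm n) ?_
    refine (ae_restrict_iff' hDm).2 (Eventually.of_forall fun x hx => ?_)
    have hx1 : ‖x.1‖ ≤ R := (norm_fst_le x).trans (hR x hx)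
    refine (hbd n x).2.trans (mul_le_mul_of_nonneg_left ?_ (by positivity))
    exact measureReal_mono (closedBall_subset_closedBall (by linarith))
      measure_closedBall_lt_top.ne
  have hJe : ∀ n, ∫ x in D, (b n)⁻¹ • (S n x - S n 0) =
      ((b n)⁻¹ * volume.real (A n)) • (∫ u, g u) -
        (ZLattice.covolume L volume) • ((b n)⁻¹ • S n 0) := by
    intro n
    rw [integral_smul, integral_sub (hSi n) (integrableOn_const hDtop), hint n,
      setIntegral_const, ← hcov, smul_sub, smul_smul, smul_comm]
  have hAr : Tendsto (fun n => (b n)⁻¹ * volume.real (A n)) atTop (𝓝 1) := by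
    refine tendsto_of_tendsto_of_tendsto_of_le_of_le (vol_ratio (E := E) (-c₀))
      (vol_ratio (E := E) 0) ?_ ?_
    · intro n
      refine mul_le_mul_of_nonneg_left ?_ (inv_nonneg.2 (hb0 n))
      rw [← sub_eq_add_neg]
      exact measureReal_mono (hA1 n) (hAtop n)
    · intro n
      refine mul_le_mul_of_nonneg_left ?_ (inv_nonneg.2 (hb0 n))
      rw [add_zero]
      exact measureReal_mono (hA2 n) measure_closedBall_lt_top.ne
  have hfin := ((hAr.smul_const (∫ u, g u)).sub hJ).const_smul (ZLattice.covolume L volume)⁻¹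
  rw [one_smul, sub_zero] at hfin
  refine hfin.congr fun n => ?_
  rw [hJe n, sub_sub_cancel, inv_smul_smul₀ hcov0]
  simp [S, T, hb]

theorem decay_bound (f : F → ℂ) (hf : Continuous f) (C r : ℝ) (hr : 0 ≤ r) (hC : 0 ≤ C)
    (h : ∀ x, ‖x‖ ^ r * ‖f x‖ ≤ C) :
    ∃ C' : ℝ, 0 ≤ C' ∧ ∀ x, ‖f x‖ ≤ C' * (1 + ‖x‖) ^ (-r) := by
  obtain ⟨M, hM⟩ := (isCompact_closedBall (0 : F) 1).exists_bound_of_continuousOn hf.continuousOn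
  have hM0 : 0 ≤ M := (norm_nonneg _).trans (hM 0 (by simp))
  refine ⟨2 ^ r * (C + M), by positivity, fun x => ?_⟩
  rw [Real.rpow_neg (by positivity), ← div_eq_mul_inv, le_div_iff₀ (by positivity)]
  rcases le_total ‖x‖ 1 with hx | hx
  · have h1 : ‖f x‖ ≤ C + M := (hM x (by simpa using hx)).trans (by linarith)
    have h2 : (1 + ‖x‖) ^ r ≤ 2 ^ r := Real.rpow_le_rpow (by positivity) (by linarith) hr
    rw [mul_comm]
    exact mul_le_mul h2 h1 (norm_nonneg _) (by positivity)
  · have h2 : (1 + ‖x‖) ^ r ≤ 2 ^ r * ‖x‖ ^ r := by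
      rw [← Real.mul_rpow (by positivity) (by positivity)]
      exact Real.rpow_le_rpow (by positivity) (by linarith) hr
    calc ‖f x‖ * (1 + ‖x‖) ^ r ≤ ‖f x‖ * (2 ^ r * ‖x‖ ^ r) :=
          mul_le_mul_of_nonneg_left h2 (norm_nonneg _)
      _ = 2 ^ r * (‖x‖ ^ r * ‖f x‖) := by ring
      _ ≤ _ := mul_le_mul_of_nonneg_left ((h x).trans (by linarith)) (by positivity)

end Helpers

/-- the finite autocorrelation coefficients
η_n(z) = (1/vol B_n) ∑_{x,y ∈ L∩B_n, x−y=z} f(x*) conj(f(y*)) of the dense Dirac comb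
converge to η(z) = (1/|det L̃|) ∫ f(u) conj(f(u − z*)) du for every z ∈ L. -/
theorem dense_comb_autocorrelation_coefficients (d m : ℕ)
    (L : Submodule ℤ (EuclideanSpace ℝ (Fin d) × EuclideanSpace ℝ (Fin m)))
    [DiscreteTopology L] [IsZLattice ℝ L]
    (hinj1 : Set.InjOn Prod.fst (L : Set (EuclideanSpace ℝ (Fin d) × EuclideanSpace ℝ (Fin m))))
    (hdense1 : Dense (physL d m L))
    (hinj2 : Set.InjOn Prod.snd (L : Set (EuclideanSpace ℝ (Fin d) × EuclideanSpace ℝ (Fin m))))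
    (hdense2 : Dense (Prod.snd '' (L : Set (EuclideanSpace ℝ (Fin d) × EuclideanSpace ℝ (Fin m)))))
    (star : EuclideanSpace ℝ (Fin d) → EuclideanSpace ℝ (Fin m))
    (hstar : ∀ p ∈ L, star (Prod.fst p) = Prod.snd p)
    (f : EuclideanSpace ℝ (Fin m) → ℂ) (hf : Continuous f)
    (C α : ℝ) (hC : 0 < C) (hα : 0 < α)
    (hdecay : ∀ x : EuclideanSpace ℝ (Fin m), ‖x‖ ^ ((m : ℝ) + 1 + α) * ‖f x‖ ≤ C)
    (z : EuclideanSpace ℝ (Fin d)) (hz : z ∈ physL d m L) :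
    Filter.Tendsto
      (fun n : ℕ => (volume (closedBall (0 : EuclideanSpace ℝ (Fin d)) n)).toReal⁻¹ •
        (∑' x : (({x ∈ physL d m L | x ∈ closedBall (0 : EuclideanSpace ℝ (Fin d)) n ∧
              x - z ∈ closedBall (0 : EuclideanSpace ℝ (Fin d)) n} :
            Set (EuclideanSpace ℝ (Fin d)))),
          f (star (x : EuclideanSpace ℝ (Fin d))) *
            (starRingEnd ℂ) (f (star ((x : EuclideanSpace ℝ (Fin d)) - z)))))
      Filter.atTop
      (nhds ((ZLattice.covolume L volume)⁻¹ •
        ∫ u, f u * (starRingEnd ℂ) (f (u - star z)))) := by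
  obtain ⟨q, hq, rfl⟩ := hz
  rw [hstar q hq]
  have hr : (0 : ℝ) ≤ (m : ℝ) + 1 + α := by positivity
  obtain ⟨C', hC', hfb⟩ := decay_bound f hf C _ hr hC.le hdecay
  set g : EuclideanSpace ℝ (Fin m) → ℂ := fun u => f u * (starRingEnd ℂ) (f (u - q.2)) with hg
  have hgc : Continuous g :=
    hf.mul (Complex.continuous_conj.comp (hf.comp (continuous_id.sub continuous_const)))
  have hgb : ∀ u, ‖g u‖ ≤ C' * C' * (1 + ‖u‖) ^ (-((m : ℝ) + 1 + α)) := by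
    intro u
    have h1 : ‖f (u - q.2)‖ ≤ C' := (hfb _).trans (mul_le_of_le_one_right hC'
      (Real.rpow_le_one_of_one_le_of_nonpos (by linarith [norm_nonneg (u - q.2)]) (by linarith)))
    rw [hg, norm_mul, RCLike.norm_conj]
    calc ‖f u‖ * ‖f (u - q.2)‖ ≤ (C' * (1 + ‖u‖) ^ (-((m : ℝ) + 1 + α))) * C' :=
          mul_le_mul (hfb u) h1 (norm_nonneg _) (by positivity)
      _ = _ := by ring
  let A : ℕ → Set (EuclideanSpace ℝ (Fin d)) := fun n =>
    {x | x ∈ closedBall (0 : EuclideanSpace ℝ (Fin d)) n ∧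
      x - q.1 ∈ closedBall (0 : EuclideanSpace ℝ (Fin d)) n}
  have hA : ∀ n, MeasurableSet (A n) := fun n =>
    measurableSet_closedBall.inter (measurableSet_closedBall.preimage (measurable_sub_const q.1))
  have key := equidist L hdense2 g hgc (C' * C') ((m : ℝ) + 1) ((m : ℝ) + 1 + α)
    (by positivity) (by simp) (by linarith) hgb A hA ‖q.1‖ (norm_nonneg _)
    (fun n x hx => by
      rw [mem_closedBall_zero_iff] at hx
      refine ⟨?_, ?_⟩
      · rw [mem_closedBall_zero_iff]; linarith [norm_nonneg q.1]
      · rw [mem_closedBall_zero_iff]; linarith [norm_sub_le x q.1])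
    (fun n x hx => hx.1)
  refine key.congr fun n => ?_
  rw [measureReal_def]
  congr 1
  rw [tsum_subtype (f := fun x => f (star x) * (starRingEnd ℂ) (f (star (x - q.1))))]
  have hinj : Function.Injective (fun p : L => p.1.1) := fun p p' h =>
    Subtype.ext (hinj1 p.2 p'.2 h)
  rw [← hinj.tsum_eq]
  · refine tsum_congr fun p => ?_
    have e1 : star p.1.1 = p.1.2 := hstar _ p.2
    have e2 : star (p.1.1 - q.1) = p.1.2 - q.2 := hstar _ (L.sub_mem p.2 hq)
    have hp : p.1.1 ∈ physL d m L := ⟨p.1, p.2, rfl⟩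
    by_cases h : p.1.1 ∈ A n
    · rw [Set.indicator_of_mem h, Set.indicator_of_mem, e1, e2]
      exact ⟨hp, h⟩
    · rw [Set.indicator_of_notMem h, Set.indicator_of_notMem fun h' => h h'.2]
  · intro x hx
    obtain ⟨p, hp, rfl⟩ := (Set.mem_of_indicator_ne_zero hx).1
    exact ⟨⟨p, hp⟩, rfl⟩
end

section
/- Autocorrelation of the dense Dirac comb: under the dense cut-and-project hypotheses with f : ℝ^m → ℂ continuous and |x|^{m+1+α}|f(x)| ≤ C, the finite autocorrelation measures γ_ω^{(n)} = (1/vol(B_n)) ω_n ∗ ω̃_n converge vaguely to the unique measure γ_ω = ∑_{z ∈ L} η(z) δ_z with η(z) = (1/|det(L̃)|) ∫_{ℝ^m} f(u) conj(f(u − z*)) du, and γ_ω is a translation-bounded, positive definite, pure point measure. -/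
open MeasureTheory Metric

/-- The finite autocorrelation coefficient η_n(z) of the dense weighted Dirac comb. -/
noncomputable def etaN (d m : ℕ)
    (L : Submodule ℤ (EuclideanSpace ℝ (Fin d) × EuclideanSpace ℝ (Fin m)))
    (star : EuclideanSpace ℝ (Fin d) → EuclideanSpace ℝ (Fin m))
    (f : EuclideanSpace ℝ (Fin m) → ℂ) (n : ℕ) (z : EuclideanSpace ℝ (Fin d)) : ℂ :=
  (volume (closedBall (0 : EuclideanSpace ℝ (Fin d)) n)).toReal⁻¹ •
    ∑' x : (({x | x ∈ physL d m L ∧ x ∈ closedBall (0 : EuclideanSpace ℝ (Fin d)) n ∧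
          x - z ∈ physL d m L ∧ x - z ∈ closedBall (0 : EuclideanSpace ℝ (Fin d)) n} :
        Set (EuclideanSpace ℝ (Fin d)))),
      f (star (x : EuclideanSpace ℝ (Fin d))) *
        (starRingEnd ℂ) (f (star ((x : EuclideanSpace ℝ (Fin d)) - z)))

/-- The limiting autocorrelation coefficient η(z). -/
noncomputable def etaLim (d m : ℕ)
    (L : Submodule ℤ (EuclideanSpace ℝ (Fin d) × EuclideanSpace ℝ (Fin m)))
    (star : EuclideanSpace ℝ (Fin d) → EuclideanSpace ℝ (Fin m))
    (f : EuclideanSpace ℝ (Fin m) → ℂ) (z : EuclideanSpace ℝ (Fin d)) : ℂ :=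
  (ZLattice.covolume L volume)⁻¹ • ∫ u, f u * (starRingEnd ℂ) (f (u - star z))

namespace DC

/-- The weight `(1 + ‖u‖)^(-s)`. -/
noncomputable def wt {H : Type*} [Norm H] (s : ℝ) (u : H) : ℝ := (1 + ‖u‖) ^ (-s)

section weights
variable {H : Type*} [NormedAddCommGroup H]

lemma wt_pos (s : ℝ) (u : H) : 0 < wt s u := by
  unfold wt; positivity

lemma wt_shift {s : ℝ} (hs : 0 ≤ s) (u v : H) : wt s u ≤ (1 + ‖v‖) ^ s * wt s (u + v) := by
  unfold wt
  rw [Real.rpow_neg (by positivity), Real.rpow_neg (by positivity), ← div_eq_mul_inv,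
    inv_eq_one_div, div_le_div_iff₀ (by positivity) (by positivity), one_mul,
    ← Real.mul_rpow (by positivity) (by positivity)]
  refine Real.rpow_le_rpow (by positivity) ?_ hs
  have := norm_add_le u v
  nlinarith [norm_nonneg u, norm_nonneg v, mul_nonneg (norm_nonneg u) (norm_nonneg v)]

lemma wt_mul {s : ℝ} (hs : 0 ≤ s) (u v : H) :
    wt s u * wt s (u - v) ≤ 2 ^ s * wt s v * (wt s u + wt s (u - v)) := by
  have key : ∀ a : H, ‖v‖ + 1 ≤ 2 * (1 + ‖a‖) → wt s a ≤ 2 ^ s * wt s v := by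
    intro a ha
    unfold wt
    rw [Real.rpow_neg (by positivity), Real.rpow_neg (by positivity), ← div_eq_mul_inv,
      inv_eq_one_div, div_le_div_iff₀ (by positivity) (by positivity), one_mul,
      ← Real.mul_rpow (by positivity) (by positivity)]
    exact Real.rpow_le_rpow (by positivity) (by linarith) hs
  have h1 := wt_pos s u
  have h2 := wt_pos s (u - v)
  have h3 := wt_pos s v
  have h4 : (0 : ℝ) < 2 ^ s := by positivity
  have h5 : ‖v‖ ≤ ‖u‖ + ‖u - v‖ := by
    have := norm_sub_le u (u - v)
    simpa using this
  rcases le_total ‖u‖ ‖u - v‖ with h | h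
  · have := key (u - v) (by linarith)
    nlinarith [mul_pos h4 h3, mul_pos (mul_pos h4 h3) h2]
  · have := key u (by linarith)
    nlinarith [mul_pos h4 h3, mul_pos (mul_pos h4 h3) h1]

lemma wt_continuous (s : ℝ) : Continuous (wt s : H → ℝ) := by
  unfold wt
  refine Continuous.rpow_const (by fun_prop) (fun x => Or.inl ?_)
  positivity

/-- bound of a continuous decaying function by the weight -/
lemma decay_bound [NormedSpace ℝ H] [FiniteDimensional ℝ H] {s : ℝ} (hs : 0 ≤ s) {f : H → ℂ}
    (hf : Continuous f) {C : ℝ} (hd : ∀ x, ‖x‖ ^ s * ‖f x‖ ≤ C) :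
    ∃ C' : ℝ, 0 ≤ C' ∧ ∀ x, ‖f x‖ ≤ C' * wt s x := by
  obtain ⟨B, hB⟩ := (isCompact_closedBall (0 : H) 1).exists_bound_of_continuousOn hf.continuousOn
  have hB0 : 0 ≤ B := (norm_nonneg _).trans (hB 0 (by simp))
  have hC0 : 0 ≤ C := le_trans (by positivity) (hd 0)
  refine ⟨2 ^ s * (B + C), by positivity, fun x => ?_⟩
  have h2 : (0 : ℝ) < 2 ^ s := by positivity
  unfold wt
  rw [Real.rpow_neg (by positivity), ← div_eq_mul_inv, le_div_iff₀ (by positivity)]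
  rcases le_total ‖x‖ 1 with h | h
  · have h1 : (1 + ‖x‖) ^ s ≤ 2 ^ s := Real.rpow_le_rpow (by positivity) (by linarith) hs
    have := hB x (by simpa using h)
    calc ‖f x‖ * (1 + ‖x‖) ^ s ≤ B * 2 ^ s := by gcongr
      _ ≤ _ := by nlinarith
  · have h1 : (1 + ‖x‖) ^ s ≤ 2 ^ s * ‖x‖ ^ s := by
      rw [← Real.mul_rpow (by positivity) (by positivity)]
      exact Real.rpow_le_rpow (by positivity) (by linarith) hs
    calc ‖f x‖ * (1 + ‖x‖) ^ s ≤ ‖f x‖ * (2 ^ s * ‖x‖ ^ s) := by gcongr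
      _ = 2 ^ s * (‖x‖ ^ s * ‖f x‖) := by ring
      _ ≤ 2 ^ s * C := by gcongr; exact hd x
      _ ≤ _ := by nlinarith

lemma wt_tendsto [NormedSpace ℝ H] [FiniteDimensional ℝ H] {s : ℝ} (hs : 0 < s) :
    Filter.Tendsto (wt s : H → ℝ) (Filter.cocompact H) (nhds 0) := by
  unfold wt
  refine (tendsto_rpow_neg_atTop hs).comp ?_
  exact Filter.tendsto_atTop_add_const_left _ _ (tendsto_norm_cocompact_atTop)

/-- The translation modulus of `f(u) conj f(u - v)`. -/
lemma modulus [NormedSpace ℝ H] [FiniteDimensional ℝ H] {s : ℝ} (hs : 0 < s) {f : H → ℂ}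
    (hf : Continuous f) {C : ℝ} (hC : 0 ≤ C) (hd : ∀ x, ‖f x‖ ≤ C * wt s x) (z : H) :
    ∀ ε > 0, ∃ δ > 0, ∀ v : H, ‖v‖ < δ → ∀ u,
      ‖f (u + v) * (starRingEnd ℂ) (f (u + v - z)) - f u * (starRingEnd ℂ) (f (u - z))‖
        ≤ ε * wt s u := by
  have h0 : Filter.Tendsto f (Filter.cocompact H) (nhds 0) := by
    refine squeeze_zero_norm hd ?_
    simpa using (wt_tendsto (H := H) hs).const_mul C
  have huc := hf.uniformContinuous_of_tendsto_cocompact h0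
  intro ε hε
  set M : ℝ := C * 2 ^ s + C * (1 + ‖z‖) ^ s + 1 with hM
  have hMpos : 0 < M := by positivity
  obtain ⟨δ, hδ, hu⟩ := Metric.uniformContinuous_iff.1 huc (ε / M) (by positivity)
  refine ⟨min δ 1, by positivity, fun v hv u => ?_⟩
  have hv1 : ‖v‖ < δ := hv.trans_le (min_le_left _ _)
  have hv2 : ‖v‖ ≤ 1 := (hv.trans_le (min_le_right _ _)).le
  have e1 : ‖f (u + v) - f u‖ ≤ ε / M := by
    have := hu (a := u + v) (b := u) (by simpa [dist_eq_norm] using hv1)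
    rw [dist_eq_norm] at this; exact this.le
  have e2 : ‖f (u + v - z) - f (u - z)‖ ≤ ε / M := by
    have := hu (a := u + v - z) (b := u - z) (by simpa [dist_eq_norm] using hv1)
    rw [dist_eq_norm] at this; exact this.le
  have hw := wt_pos s u
  have e3 : ‖f (u + v)‖ ≤ C * 2 ^ s * wt s u := by
    refine (hd _).trans ?_
    have h1 := wt_shift hs.le (u + v) (-v)
    rw [add_neg_cancel_right, norm_neg] at h1
    have h2 : (1 + ‖v‖) ^ s ≤ 2 ^ s := Real.rpow_le_rpow (by positivity) (by linarith) hs.le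
    calc C * wt s (u + v) ≤ C * ((1 + ‖v‖) ^ s * wt s u) := by gcongr
      _ ≤ C * (2 ^ s * wt s u) := by gcongr
      _ = _ := by ring
  have e4 : ‖f (u - z)‖ ≤ C * (1 + ‖z‖) ^ s * wt s u := by
    refine (hd _).trans ?_
    have h1 := wt_shift hs.le (u - z) z
    rw [sub_add_cancel] at h1
    calc C * wt s (u - z) ≤ C * ((1 + ‖z‖) ^ s * wt s u) := by gcongr
      _ = _ := by ring
  have e5 : f (u + v) * (starRingEnd ℂ) (f (u + v - z)) - f u * (starRingEnd ℂ) (f (u - z))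
      = f (u + v) * (starRingEnd ℂ) (f (u + v - z) - f (u - z))
        + (f (u + v) - f u) * (starRingEnd ℂ) (f (u - z)) := by
    rw [map_sub]; ring
  rw [e5]
  refine (norm_add_le _ _).trans ?_
  rw [norm_mul, norm_mul, RCLike.norm_conj, RCLike.norm_conj]
  calc ‖f (u + v)‖ * ‖f (u + v - z) - f (u - z)‖ + ‖f (u + v) - f u‖ * ‖f (u - z)‖
      ≤ (C * 2 ^ s * wt s u) * (ε / M) + (ε / M) * (C * (1 + ‖z‖) ^ s * wt s u) := by gcongr
    _ = (M - 1) * (ε / M) * wt s u := by rw [hM]; ring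
    _ ≤ M * (ε / M) * wt s u := by gcongr; linarith
    _ = ε * wt s u := by field_simp

end weights

section volumes
variable {E : Type*} [NormedAddCommGroup E] [NormedSpace ℝ E] [FiniteDimensional ℝ E]
  [MeasureSpace E] [BorelSpace E] [(volume : Measure E).IsAddHaarMeasure]

/-- Volume of the closed ball of radius `x`. -/
noncomputable def V (E : Type*) [NormedAddCommGroup E] [MeasureSpace E] (x : ℝ) : ℝ :=
  (volume (closedBall (0 : E) x)).toReal

lemma V_nonneg (x : ℝ) : 0 ≤ V E x := ENNReal.toReal_nonneg

end volumes
end DC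

namespace DC
section volumes2
variable {E : Type*} [NormedAddCommGroup E] [NormedSpace ℝ E] [FiniteDimensional ℝ E]
  [MeasureSpace E] [BorelSpace E] [(volume : Measure E).IsAddHaarMeasure]

lemma V_eq {x : ℝ} (hx : 0 ≤ x) : V E x = x ^ (Module.finrank ℝ E) * V E 1 :=
  Measure.addHaar_real_closedBall' volume (0 : E) hx

lemma V_pos {x : ℝ} (hx : 0 < x) : 0 < V E x := by
  unfold V
  exact ENNReal.toReal_pos (measure_closedBall_pos volume _ hx).ne' measure_closedBall_lt_top.ne

lemma V_ratio (b : ℝ) : Filter.Tendsto (fun n : ℕ => (V E (n : ℝ))⁻¹ * V E (n + b)) Filter.atTop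
    (nhds 1) := by
  have h1 : Filter.Tendsto (fun n : ℕ => (1 + b / (n : ℝ)) ^ (Module.finrank ℝ E)) Filter.atTop
      (nhds 1) := by
    have : Filter.Tendsto (fun n : ℕ => b / (n : ℝ)) Filter.atTop (nhds 0) :=
      tendsto_const_div_atTop_nhds_zero_nat b
    simpa using (this.const_add 1).pow (Module.finrank ℝ E)
  refine h1.congr' ?_
  filter_upwards [Filter.eventually_gt_atTop 0,
    tendsto_natCast_atTop_atTop.eventually_ge_atTop (-b)] with n hn hb
  have hn' : (0 : ℝ) < n := by exact_mod_cast hn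
  have h2 : V E 1 ≠ 0 := (V_pos (E := E) one_pos).ne'
  rw [V_eq hn'.le, V_eq (x := n + b) (by linarith)]
  have : 1 + b / (n : ℝ) = (n + b) / n := by field_simp
  rw [this, div_pow]
  field_simp

lemma V_annulus (b : ℝ) (hb : 0 ≤ b) : Filter.Tendsto (fun n : ℕ => (V E (n : ℝ))⁻¹ *
    (volume (closedBall (0 : E) (n + b) \ closedBall 0 (n - b))).toReal) Filter.atTop
    (nhds 0) := by
  have h := (V_ratio (E := E) b).sub (V_ratio (E := E) (-b))
  rw [sub_self] at h
  refine h.congr (fun n => ?_)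
  rw [← mul_sub]
  congr 1
  have hsub : closedBall (0 : E) (n - b) ⊆ closedBall 0 (n + b) :=
    closedBall_subset_closedBall (by linarith)
  rw [measure_diff hsub measurableSet_closedBall.nullMeasurableSet measure_closedBall_lt_top.ne,
    ENNReal.toReal_sub_of_le (measure_mono hsub) measure_closedBall_lt_top.ne]
  simp [V, sub_eq_add_neg]
end volumes2

section lat
variable {E H : Type*} [NormedAddCommGroup E] [NormedSpace ℝ E] [FiniteDimensional ℝ E]
  [MeasureSpace E] [BorelSpace E] [(volume : Measure E).IsAddHaarMeasure]
  [NormedAddCommGroup H] [NormedSpace ℝ H] [FiniteDimensional ℝ H]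
  [MeasureSpace H] [BorelSpace H] [(volume : Measure H).IsAddHaarMeasure]

instance instHaarProd : (volume : Measure (E × H)).IsAddHaarMeasure :=
  Measure.prod.instIsAddHaarMeasure _ _

instance instInvLat (L : Submodule ℤ (E × H)) :
    VAddInvariantMeasure L (E × H) volume :=
  inferInstanceAs <| VAddInvariantMeasure L.toAddSubgroup (E × H) volume

instance instMeasVAdd (L : Submodule ℤ (E × H)) :
    MeasurableConstVAdd L (E × H) :=
  inferInstanceAs <| MeasurableConstVAdd L.toAddSubgroup (E × H)

lemma exists_fd (L : Submodule ℤ (E × H)) [DiscreteTopology L] [IsZLattice ℝ L] :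
    ∃ (D : Set (E × H)) (r : ℝ), 0 ≤ r ∧ IsAddFundamentalDomain L D volume ∧ MeasurableSet D ∧
      (∀ w ∈ D, ‖w‖ ≤ r) ∧ volume D = ENNReal.ofReal (ZLattice.covolume L volume) := by
  have := ZLattice.module_finite ℝ L
  have := ZLattice.module_free ℝ L
  let b := Module.Free.chooseBasis ℤ L
  have hb := ZSpan.fundamentalDomain_isBounded (b.ofZLatticeBasis ℝ)
  obtain ⟨r, hr⟩ := isBounded_iff_forall_norm_le.1 hb
  have hD := ZLattice.isAddFundamentalDomain b (volume : Measure (E × H))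
  refine ⟨ZSpan.fundamentalDomain (b.ofZLatticeBasis ℝ), max r 0, le_max_right _ _, hD,
    ZSpan.fundamentalDomain_measurableSet _, fun w hw => (hr w hw).trans (le_max_left _ _), ?_⟩
  rw [ZLattice.covolume_eq_measure_fundamentalDomain L volume hD, measureReal_def,
    ENNReal.ofReal_toReal hb.measure_lt_top.ne]

lemma key (L : Submodule ℤ (E × H)) [DiscreteTopology L] [IsZLattice ℝ L] {s : ℝ}
    (hs : (Module.finrank ℝ H : ℝ) < s) :
    ∃ K r : ℝ, 0 ≤ K ∧ 0 ≤ r ∧ ∀ (v0 : H) (A A' : Set E), MeasurableSet A' → volume A' ≠ ⊤ →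
      (∀ x ∈ A, ∀ t, ‖t‖ ≤ r → x + t ∈ A') →
      Summable (fun q : L => A.indicator (fun _ => wt s (q.1.2 - v0)) q.1.1) ∧
      ∑' q : L, A.indicator (fun _ => wt s (q.1.2 - v0)) q.1.1 ≤ K * (volume A').toReal := by
  obtain ⟨D, r, hr, hD, hDm, hDr, hDv⟩ := exists_fd L
  have hs0 : 0 < s := lt_of_le_of_lt (by positivity) hs
  set I : ENNReal := ∫⁻ u : H, ENNReal.ofReal (wt s u) with hI
  have hIfin : I ≠ ⊤ := by
    have : Integrable (wt s : H → ℝ) volume := integrable_one_add_norm hs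
    exact this.lintegral_lt_top.ne
  have hcov : 0 < ZLattice.covolume L volume := ZLattice.covolume_pos L volume
  refine ⟨(1 + r) ^ s * I.toReal / ZLattice.covolume L volume, r, by positivity, hr, ?_⟩
  intro v0 A A' hA' hA'fin hAA'
  set a : L → ℝ := fun q => A.indicator (fun _ => wt s (q.1.2 - v0)) q.1.1 with ha
  have ha0 : ∀ q, 0 ≤ a q := fun q => Set.indicator_nonneg (fun _ _ => (wt_pos _ _).le) _
  let Ψ : E × H → ENNReal := fun w => A'.indicator 1 w.1 * ENNReal.ofReal (wt s (w.2 - v0))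
  have hΨ : ∫⁻ w, Ψ w = volume A' * I := by
    have : ∫⁻ w : E × H, Ψ w = (∫⁻ x : E, A'.indicator 1 x) *
        ∫⁻ u : H, ENNReal.ofReal (wt s (u - v0)) := by
      refine lintegral_prod_mul (f := A'.indicator 1)
        (g := fun u : H => ENNReal.ofReal (wt s (u - v0))) ?_ ?_
      · exact (measurable_one.indicator hA').aemeasurable
      · exact (((wt_continuous s).comp (continuous_id.sub continuous_const)).measurable.ennreal_ofReal).aemeasurable
    rw [this, lintegral_indicator_one hA', lintegral_sub_right_eq_self (fun u : H => ENNReal.ofReal (wt s u)) v0]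
  have hle : ∀ q : L, ∀ w ∈ D, ENNReal.ofReal (a q) ≤ ENNReal.ofReal ((1 + r) ^ s) * Ψ (q +ᵥ w) := by
    intro q w hw
    have hw1 : ‖w.1‖ ≤ r := (norm_fst_le w).trans (hDr w hw)
    have hw2 : ‖w.2‖ ≤ r := (norm_snd_le w).trans (hDr w hw)
    by_cases hq : q.1.1 ∈ A
    · have h1 : q.1.1 + w.1 ∈ A' := hAA' _ hq _ hw1
      have h2 : Ψ (q +ᵥ w) = ENNReal.ofReal (wt s (q.1.2 + w.2 - v0)) := by
        change A'.indicator 1 (q.1.1 + w.1) * ENNReal.ofReal (wt s (q.1.2 + w.2 - v0)) = _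
        simp [h1]
      rw [h2, ← ENNReal.ofReal_mul (by positivity)]
      apply ENNReal.ofReal_le_ofReal
      simp only [ha, Set.indicator_of_mem hq]
      refine (wt_shift hs0.le (q.1.2 - v0) w.2).trans ?_
      rw [sub_add_eq_add_sub]
      have := (wt_pos s (q.1.2 + w.2 - v0)).le
      gcongr
    · simp [ha, Set.indicator_of_notMem hq]
  have hsum : (∑' q, ENNReal.ofReal (a q)) * volume D ≤
      ENNReal.ofReal ((1 + r) ^ s) * (volume A' * I) := by
    rw [← hΨ, hD.lintegral_eq_tsum'' Ψ, ← ENNReal.tsum_mul_left, ← ENNReal.tsum_mul_right]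
    refine ENNReal.tsum_le_tsum (fun q => ?_)
    rw [← setLIntegral_const, ← lintegral_const_mul' _ _ ENNReal.ofReal_ne_top]
    exact setLIntegral_mono' hDm (hle q)
  have hrhs : ENNReal.ofReal ((1 + r) ^ s) * (volume A' * I) =
      ENNReal.ofReal ((1 + r) ^ s * ((volume A').toReal * I.toReal)) := by
    rw [ENNReal.ofReal_mul (by positivity), ENNReal.ofReal_mul (by positivity),
      ENNReal.ofReal_toReal hA'fin, ENNReal.ofReal_toReal hIfin]
  rw [hrhs, hDv] at hsum
  have hfin : ∑' q, ENNReal.ofReal (a q) ≠ ⊤ := by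
    intro h
    rw [h, ENNReal.top_mul (by simpa using hcov)] at hsum
    simp at hsum
  have hS : Summable a := by
    have := ENNReal.summable_toReal hfin
    refine this.congr (fun q => ?_)
    rw [ENNReal.toReal_ofReal (ha0 q)]
  refine ⟨hS, ?_⟩
  rw [← ENNReal.ofReal_tsum_of_nonneg ha0 hS, ← ENNReal.ofReal_mul (tsum_nonneg ha0),
    ENNReal.ofReal_le_ofReal_iff (by positivity)] at hsum
  rw [div_mul_eq_mul_div, le_div_iff₀ hcov]
  calc _ ≤ _ := hsum
    _ = _ := by ring
end lat
end DC

namespace DC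
section lat2
set_option linter.unusedSectionVars false
variable {E H : Type*} [NormedAddCommGroup E] [NormedSpace ℝ E] [FiniteDimensional ℝ E]
  [MeasureSpace E] [BorelSpace E] [(volume : Measure E).IsAddHaarMeasure]
  [NormedAddCommGroup H] [NormedSpace ℝ H] [FiniteDimensional ℝ H]
  [MeasureSpace H] [BorelSpace H] [(volume : Measure H).IsAddHaarMeasure]
  (L : Submodule ℤ (E × H)) [DiscreteTopology L] [IsZLattice ℝ L] {s : ℝ}

lemma summ (hs : (Module.finrank ℝ H : ℝ) < s) (v0 : H) (A : Set E) (c : E) (ρ : ℝ)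
    (hA : A ⊆ closedBall c ρ) :
    Summable (fun q : L => A.indicator (fun _ => wt s (q.1.2 - v0)) q.1.1) := by
  obtain ⟨K, r, hK, hr, h⟩ := key L hs
  refine (h v0 A (closedBall c (ρ + r)) measurableSet_closedBall
    measure_closedBall_lt_top.ne ?_).1
  intro x hx t ht
  have := hA hx
  rw [mem_closedBall, dist_eq_norm] at this ⊢
  calc ‖x + t - c‖ = ‖(x - c) + t‖ := by congr 1; abel
    _ ≤ _ := (norm_add_le _ _).trans (by gcongr)

lemma transl (hs : (Module.finrank ℝ H : ℝ) < s) (ρ : ℝ) :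
    ∃ B : ℝ, ∀ (c : E) (v0 : H),
      ∑' q : L, (closedBall c ρ).indicator (fun _ => wt s (q.1.2 - v0)) q.1.1 ≤ B := by
  obtain ⟨K, r, hK, hr, h⟩ := key L hs
  refine ⟨K * V E (ρ + r), fun c v0 => ?_⟩
  have := (h v0 (closedBall c ρ) (closedBall c (ρ + r)) measurableSet_closedBall
    measure_closedBall_lt_top.ne ?_).2
  · rwa [Measure.addHaar_closedBall_center] at this
  intro x hx t ht
  rw [mem_closedBall, dist_eq_norm] at hx ⊢
  calc ‖x + t - c‖ = ‖(x - c) + t‖ := by congr 1; abel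
    _ ≤ _ := (norm_add_le _ _).trans (by gcongr)

lemma bulk (hs : (Module.finrank ℝ H : ℝ) < s) :
    ∃ M : ℝ, 0 ≤ M ∧ ∀ᶠ n : ℕ in Filter.atTop, ∀ (c : E) (v0 : H),
      (V E (n : ℝ))⁻¹ * ∑' q : L, (closedBall c n).indicator (fun _ => wt s (q.1.2 - v0)) q.1.1
        ≤ M := by
  obtain ⟨K, r, hK, hr, h⟩ := key L hs
  refine ⟨2 * K, by positivity, ?_⟩
  filter_upwards [(V_ratio (E := E) r).eventually_le_const one_lt_two] with n hn c v0
  have := (h v0 (closedBall c n) (closedBall c (n + r)) measurableSet_closedBall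
    measure_closedBall_lt_top.ne ?_).2
  · rw [Measure.addHaar_closedBall_center] at this
    have hV : 0 ≤ (V E (n : ℝ))⁻¹ := inv_nonneg.2 (V_nonneg _)
    calc _ ≤ (V E (n : ℝ))⁻¹ * (K * V E (n + r)) := by gcongr; exact this
      _ = ((V E (n : ℝ))⁻¹ * V E (n + r)) * K := by ring
      _ ≤ _ := by gcongr
  intro x hx t ht
  rw [mem_closedBall, dist_eq_norm] at hx ⊢
  calc ‖x + t - c‖ = ‖(x - c) + t‖ := by congr 1; abel
    _ ≤ _ := (norm_add_le _ _).trans (by gcongr)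

/-- annulus around the sphere of radius `n`. -/
def ann (E : Type*) [NormedAddCommGroup E] (n : ℕ) (a : ℝ) : Set E :=
  closedBall (0 : E) (n + a) \ closedBall 0 (n - a)

lemma bdry (hs : (Module.finrank ℝ H : ℝ) < s) (a : ℝ) (ha : 0 ≤ a) (v0 : H) :
    Filter.Tendsto (fun n : ℕ => (V E (n : ℝ))⁻¹ *
      ∑' q : L, (ann E n a).indicator (fun _ => wt s (q.1.2 - v0)) q.1.1) Filter.atTop
      (nhds 0) := by
  obtain ⟨K, r, hK, hr, h⟩ := key L hs
  have h1 := (V_annulus (E := E) (a + r) (by positivity)).mul_const K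
  rw [zero_mul] at h1
  refine squeeze_zero (fun n => ?_) (fun n => ?_) h1
  · refine mul_nonneg (inv_nonneg.2 (V_nonneg _)) (tsum_nonneg fun q => ?_)
    exact Set.indicator_nonneg (fun _ _ => (wt_pos _ _).le) _
  · have := (h v0 (ann E n a) (closedBall (0 : E) (n + (a + r)) \ closedBall 0 (n - (a + r)))
      (measurableSet_closedBall.diff measurableSet_closedBall)
      ((measure_mono Set.sdiff_subset).trans_lt measure_closedBall_lt_top).ne ?_).2
    · have hV : 0 ≤ (V E (n : ℝ))⁻¹ := inv_nonneg.2 (V_nonneg _)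
      rw [mul_assoc, mul_comm _ K]
      gcongr
    rintro x ⟨hx1, hx2⟩ t ht
    simp only [Set.mem_sdiff, mem_closedBall, dist_zero_right, not_le] at hx1 hx2 ⊢
    have h3 := norm_add_le x t
    have h4 : ‖x‖ ≤ ‖x + t‖ + ‖t‖ := by simpa using norm_sub_le (x + t) t
    constructor <;> linarith

/-- product test function -/
noncomputable def psi (φ : H → ℂ) (n : ℕ) (w : E × H) : ℂ :=
  (closedBall (0 : E) n).indicator (fun _ => φ w.2) w.1

/-- ball averages of the periodization -/
noncomputable def T (φ : H → ℂ) (n : ℕ) (w : E × H) : ℂ :=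
  (V E (n : ℝ))⁻¹ • ∑' q : L, psi φ n ((q : E × H) + w)

lemma psi_bound {φ : H → ℂ} {C : ℝ} (hφ : ∀ u, ‖φ u‖ ≤ C * wt s u) (n : ℕ)
    (q w : E × H) : ‖psi φ n (q + w)‖ ≤
      C * (closedBall (-w.1) n).indicator (fun _ => wt s (q.2 - (-w.2))) q.1 := by
  by_cases h : q.1 + w.1 ∈ closedBall (0 : E) n
  · have h' : q.1 ∈ closedBall (-w.1) (n : ℝ) := by
      simpa [mem_closedBall, dist_eq_norm] using h
    simp only [psi, Prod.fst_add, Prod.snd_add]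
    rw [Set.indicator_of_mem h, Set.indicator_of_mem h', sub_neg_eq_add]
    exact hφ _
  · have h' : q.1 ∉ closedBall (-w.1) (n : ℝ) := by
      simpa [mem_closedBall, dist_eq_norm] using h
    simp only [psi, Prod.fst_add, Prod.snd_add]
    rw [Set.indicator_of_notMem h, Set.indicator_of_notMem h']
    simp

lemma psi_summable (hs : (Module.finrank ℝ H : ℝ) < s) {φ : H → ℂ} {C : ℝ}
    (hφ : ∀ u, ‖φ u‖ ≤ C * wt s u) (n : ℕ) (w : E × H) :
    Summable (fun q : L => psi φ n ((q : E × H) + w)) :=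
  Summable.of_norm_bounded ((summ L hs (-w.2) (closedBall (-w.1) n) (-w.1) n subset_rfl).mul_left C)
    (fun q => psi_bound hφ n q w)

lemma T_bound (hs : (Module.finrank ℝ H : ℝ) < s) {φ : H → ℂ} {C : ℝ} (hC : 0 ≤ C)
    (hφ : ∀ u, ‖φ u‖ ≤ C * wt s u) :
    ∃ M : ℝ, ∀ᶠ n : ℕ in Filter.atTop, ∀ w : E × H, ‖T L φ n w‖ ≤ M := by
  obtain ⟨M, hM, h⟩ := bulk L hs
  refine ⟨C * M, ?_⟩
  filter_upwards [h] with n hn w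
  have h1 := tsum_of_norm_bounded
    ((summ L hs (-w.2) (closedBall (-w.1) n) (-w.1) n subset_rfl).mul_left C).hasSum
    (fun q : L => psi_bound hφ n q w)
  have hV : 0 ≤ (V E (n : ℝ))⁻¹ := inv_nonneg.2 (V_nonneg _)
  rw [T, norm_smul, Real.norm_of_nonneg hV]
  rw [tsum_mul_left] at h1
  calc _ ≤ _ := mul_le_mul_of_nonneg_left h1 hV
    _ = C * ((V E (n : ℝ))⁻¹ * ∑' q : L, (closedBall (-w.1) n).indicator
          (fun _ => wt s (q.1.2 - (-w.2))) q.1.1) := by ring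
    _ ≤ _ := by gcongr; exact hn _ _

lemma T_periodic (φ : H → ℂ) (n : ℕ) (w : E × H) (l : L) :
    T L φ n w = T L φ n (w - l) := by
  unfold T
  congr 1
  rw [← (Equiv.addRight (-l)).tsum_eq]
  congr 1
  ext q
  congr 1
  simp only [Equiv.coe_addRight, Submodule.coe_add, Submodule.coe_neg]
  abel

lemma psi_diff {φ : H → ℂ} {C ε : ℝ} (hC : 0 ≤ C) (hε : 0 ≤ ε) (hφ : ∀ u, ‖φ u‖ ≤ C * wt s u)
    (n : ℕ) (q w : E × H) (hm : ‖φ (q.2 + w.2) - φ q.2‖ ≤ ε * wt s q.2) :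
    ‖psi φ n (q + w) - psi φ n (q + 0)‖ ≤
      ε * (closedBall (0 : E) n).indicator (fun _ => wt s (q.2 - 0)) q.1 +
      (C * (ann E n (‖w.1‖ + 1)).indicator (fun _ => wt s (q.2 - (-w.2))) q.1 +
      C * (ann E n (‖w.1‖ + 1)).indicator (fun _ => wt s (q.2 - 0)) q.1) := by
  have i1 : 0 ≤ (closedBall (0 : E) (n : ℝ)).indicator (fun _ => wt s (q.2 - 0)) q.1 :=
    Set.indicator_nonneg (fun _ _ => (wt_pos _ _).le) _
  have i2 : 0 ≤ (ann E n (‖w.1‖ + 1)).indicator (fun _ => wt s (q.2 - (-w.2))) q.1 :=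
    Set.indicator_nonneg (fun _ _ => (wt_pos _ _).le) _
  have i3 : 0 ≤ (ann E n (‖w.1‖ + 1)).indicator (fun _ => wt s (q.2 - 0)) q.1 :=
    Set.indicator_nonneg (fun _ _ => (wt_pos _ _).le) _
  have n1 := norm_add_le q.1 w.1
  have n2 : ‖q.1‖ ≤ ‖q.1 + w.1‖ + ‖w.1‖ := by simpa using norm_sub_le (q.1 + w.1) w.1
  rw [add_zero]
  simp only [psi, Prod.fst_add, Prod.snd_add]
  by_cases h1 : q.1 + w.1 ∈ closedBall (0 : E) n <;> by_cases h2 : q.1 ∈ closedBall (0 : E) n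
  · rw [Set.indicator_of_mem h1, Set.indicator_of_mem h2]
    rw [Set.indicator_of_mem h2]
    rw [sub_zero] at *
    have := mul_nonneg hC i2
    have := mul_nonneg hC i3
    linarith
  · have h3 : q.1 ∈ ann E n (‖w.1‖ + 1) := by
      simp only [ann, Set.mem_sdiff, mem_closedBall, dist_zero_right, not_le] at h1 h2 ⊢
      constructor <;> linarith [norm_nonneg w.1]
    rw [Set.indicator_of_mem h1, Set.indicator_of_notMem h2, sub_zero]
    rw [Set.indicator_of_mem h3, sub_neg_eq_add]
    have := mul_nonneg hC i3
    have := mul_nonneg hε i1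
    have := hφ (q.2 + w.2)
    linarith
  · have h3 : q.1 ∈ ann E n (‖w.1‖ + 1) := by
      simp only [ann, Set.mem_sdiff, mem_closedBall, dist_zero_right, not_le] at h1 h2 ⊢
      constructor <;> linarith [norm_nonneg w.1]
    rw [Set.indicator_of_notMem h1, Set.indicator_of_mem h2, zero_sub, norm_neg]
    rw [Set.indicator_of_mem h3 (fun _ => wt s (q.2 - 0)), sub_zero]
    have := mul_nonneg hC i2
    have := mul_nonneg hε i1
    rw [sub_zero] at this
    have := hφ q.2
    linarith
  · rw [Set.indicator_of_notMem h1, Set.indicator_of_notMem h2]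
    simp only [sub_self, norm_zero]
    positivity

lemma T_pointwise (hs : (Module.finrank ℝ H : ℝ) < s)
    (hdense : Dense (Prod.snd '' (L : Set (E × H)))) {φ : H → ℂ} {C : ℝ} (hC : 0 ≤ C)
    (hφ : ∀ u, ‖φ u‖ ≤ C * wt s u)
    (hmod : ∀ ε > 0, ∃ δ > 0, ∀ v : H, ‖v‖ < δ → ∀ u, ‖φ (u + v) - φ u‖ ≤ ε * wt s u)
    (w : E × H) :
    Filter.Tendsto (fun n => T L φ n w - T L φ n 0) Filter.atTop (nhds 0) := by
  obtain ⟨M, hM, hbulk⟩ := bulk L hs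
  rw [Metric.tendsto_nhds]
  intro ε hε
  obtain ⟨δ, hδ, hmod⟩ := hmod (ε / (2 * (M + 1))) (by positivity)
  obtain ⟨_, ⟨l, hl, rfl⟩, hl2⟩ := hdense.exists_dist_lt w.2 hδ
  rw [dist_eq_norm] at hl2
  set w' : E × H := w - l with hw'
  have hb1 := bdry L hs (‖w'.1‖ + 1) (by positivity) (-w'.2)
  have hb2 := bdry L hs (‖w'.1‖ + 1) (by positivity) (0 : H)
  have hb := (hb1.add hb2).const_mul C
  rw [add_zero, mul_zero] at hb
  filter_upwards [hbulk, hb.eventually_lt_const (half_pos hε)] with n h1 h2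
  rw [dist_zero_right, T_periodic L φ n w ⟨l, hl⟩]
  change ‖T L φ n w' - T L φ n 0‖ < ε
  unfold T
  rw [← smul_sub, ← (psi_summable L hs hφ n w').tsum_sub (psi_summable L hs hφ n 0)]
  have hV : 0 ≤ (V E (n : ℝ))⁻¹ := inv_nonneg.2 (V_nonneg _)
  have s1 := (summ L hs 0 (closedBall (0 : E) n) 0 n subset_rfl)
  have s2 := (summ L hs (-w'.2) (ann E n (‖w'.1‖ + 1)) 0 _ Set.sdiff_subset)
  have s3 := (summ L hs 0 (ann E n (‖w'.1‖ + 1)) 0 _ Set.sdiff_subset)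
  have h3 := tsum_of_norm_bounded
    ((s1.mul_left (ε / (2 * (M + 1)))).hasSum.add
      ((s2.mul_left C).hasSum.add (s3.mul_left C).hasSum))
    (fun q : L => psi_diff hC (by positivity) hφ n q w' (hmod w'.2 (by simpa [hw'] using hl2) _))
  rw [norm_smul, Real.norm_of_nonneg hV]
  rw [tsum_mul_left, tsum_mul_left, tsum_mul_left] at h3
  have h4 := h1 0 0
  calc _ ≤ _ := mul_le_mul_of_nonneg_left h3 hV
    _ = ε / (2 * (M + 1)) * ((V E (n : ℝ))⁻¹ * ∑' q : L, (closedBall (0 : E) n).indicator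
          (fun _ => wt s (q.1.2 - 0)) q.1.1) + _ := by rw [mul_add, mul_left_comm]
    _ ≤ ε / (2 * (M + 1)) * (M + 1) + _ := by gcongr; linarith
    _ = ε / 2 + C * ((V E (n : ℝ))⁻¹ * (∑' q : L, (ann E n (‖w'.1‖ + 1)).indicator
          (fun _ => wt s (q.1.2 - (-w'.2))) q.1.1) + (V E (n : ℝ))⁻¹ * (∑' q : L,
          (ann E n (‖w'.1‖ + 1)).indicator (fun _ => wt s (q.1.2 - 0)) q.1.1)) := by
        congr 1
        · field_simp
        · ring
    _ < ε := by linarith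

lemma psi_integrable {φ : H → ℂ} (hφi : Integrable φ volume) (n : ℕ) :
    Integrable (psi φ n : E × H → ℂ) volume ∧
    ∫ w : E × H, psi φ n w = (V E (n : ℝ)) • ∫ u, φ u := by
  have h1 : (psi φ n : E × H → ℂ) = fun w =>
      (closedBall (0 : E) n).indicator (fun _ => (1 : ℂ)) w.1 * φ w.2 := by
    ext w
    by_cases h : w.1 ∈ closedBall (0 : E) n
    · simp only [psi, Set.indicator_of_mem h, one_mul]
    · simp only [psi, Set.indicator_of_notMem h, zero_mul]
  have h2 : Integrable ((closedBall (0 : E) n).indicator (fun _ => (1 : ℂ))) volume :=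
    (integrable_indicator_iff measurableSet_closedBall).2
      (integrableOn_const measure_closedBall_lt_top.ne)
  rw [h1]
  refine ⟨h2.mul_prod hφi, ?_⟩
  have := integral_prod_mul (μ := (volume : Measure E)) (ν := (volume : Measure H))
    ((closedBall (0 : E) n).indicator (fun _ => (1 : ℂ))) φ
  rw [← Measure.volume_eq_prod] at this
  rw [this, integral_indicator_const _ measurableSet_closedBall]
  simp [V, measureReal_def]

lemma T_integral {φ : H → ℂ} (hφi : Integrable φ volume) {D : Set (E × H)}
    (hD : IsAddFundamentalDomain L D volume) {n : ℕ} (hn : 0 < n) :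
    ∫ w in D, T L φ n w = ∫ u, φ u := by
  obtain ⟨h1, h2⟩ := psi_integrable (E := E) hφi n
  have hV : V E (n : ℝ) ≠ 0 := (V_pos (by exact_mod_cast hn)).ne'
  unfold T
  rw [integral_smul, integral_tsum]
  · have := hD.integral_eq_tsum'' _ h1
    change _ = ∑' q : L, ∫ w in D, psi φ n ((q : E × H) + w) at this
    rw [← this, h2, smul_smul, inv_mul_cancel₀ hV, one_smul]
  · intro q
    have := ((measurePreserving_add_left (volume : Measure (E × H)) (q : E × H)).integrable_comp_of_integrable h1)
    exact this.aestronglyMeasurable.restrict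
  · have := hD.lintegral_eq_tsum'' (fun w => ‖psi φ n w‖ₑ)
    change _ = ∑' q : L, ∫⁻ w in D, ‖psi φ n ((q : E × H) + w)‖ₑ at this
    rw [← this]
    exact h1.2.ne

lemma equidist (hs : (Module.finrank ℝ H : ℝ) < s)
    (hdense : Dense (Prod.snd '' (L : Set (E × H)))) {φ : H → ℂ} (hc : Continuous φ)
    {C : ℝ} (hC : 0 ≤ C) (hφ : ∀ u, ‖φ u‖ ≤ C * wt s u)
    (hmod : ∀ ε > 0, ∃ δ > 0, ∀ v : H, ‖v‖ < δ → ∀ u, ‖φ (u + v) - φ u‖ ≤ ε * wt s u) :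
    Filter.Tendsto (fun n => T L φ n (0 : E × H)) Filter.atTop
      (nhds ((ZLattice.covolume L volume)⁻¹ • ∫ u, φ u)) := by
  obtain ⟨D, r, hr, hD, hDm, hDr, hDv⟩ := exists_fd L
  have hcov : 0 < ZLattice.covolume L volume := ZLattice.covolume_pos L volume
  have hφi : Integrable φ volume := by
    have : Integrable (wt s : H → ℝ) volume := integrable_one_add_norm hs
    exact (this.const_mul C).mono' hc.aestronglyMeasurable (Filter.Eventually.of_forall hφ)
  have hDfin : volume D ≠ ⊤ := by rw [hDv]; exact ENNReal.ofReal_ne_top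
  have : IsFiniteMeasure (volume.restrict D) := ⟨by simpa using hDfin.lt_top⟩
  obtain ⟨M, hM⟩ := T_bound L hs hC hφ
  have hmeas : ∀ n, AEStronglyMeasurable (T L φ n) (volume.restrict D) := by
    intro n
    suffices h : AEStronglyMeasurable (fun w => ∑' q : L, psi φ n ((q : E × H) + w))
        (volume.restrict D) from h.const_smul (V E (n : ℝ))⁻¹
    refine aestronglyMeasurable_of_tendsto_ae (Filter.atTop : Filter (Finset L))
      (f := fun S w => ∑ q ∈ S, psi φ n ((q : E × H) + w)) (fun S => ?_)
      (Filter.Eventually.of_forall fun w => (psi_summable L hs hφ n w).hasSum)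
    refine Finset.aestronglyMeasurable_fun_sum _ fun q _ => ?_
    have := ((measurePreserving_add_left (volume : Measure (E × H)) (q : E × H)).integrable_comp_of_integrable (psi_integrable hφi n).1)
    exact this.aestronglyMeasurable.restrict
  have hlim : Filter.Tendsto (fun n => ∫ w in D, (T L φ n w - T L φ n 0)) Filter.atTop
      (nhds (∫ w in D, (0 : ℂ))) := by
    refine tendsto_integral_filter_of_dominated_convergence (fun _ => M + M) ?_ ?_
      (integrable_const _) ?_
    · exact Filter.Eventually.of_forall fun n => (hmeas n).sub aestronglyMeasurable_const
    · filter_upwards [hM] with n hn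
      exact Filter.Eventually.of_forall fun w =>
        (norm_sub_le _ _).trans (add_le_add (hn w) (hn 0))
    · exact Filter.Eventually.of_forall fun w => T_pointwise L hs hdense hC hφ hmod w
  rw [integral_zero] at hlim
  have hev : ∀ᶠ n in Filter.atTop, ∫ w in D, (T L φ n w - T L φ n 0) =
      (∫ u, φ u) - (ZLattice.covolume L volume) • T L φ n 0 := by
    filter_upwards [Filter.eventually_gt_atTop 0, hM] with n hn hMn
    have hi : Integrable (T L φ n) (volume.restrict D) :=
      (integrable_const M).mono' (hmeas n) (Filter.Eventually.of_forall hMn)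
    rw [integral_sub hi (integrable_const _), T_integral L hφi hD hn, setIntegral_const,
      measureReal_def, hDv, ENNReal.toReal_ofReal hcov.le]
  have h2 := ((tendsto_const_nhds (x := ∫ u, φ u)).sub (hlim.congr' hev)).const_smul
    (ZLattice.covolume L volume)⁻¹
  rw [sub_zero] at h2
  refine h2.congr (fun n => ?_)
  rw [sub_sub_cancel, smul_smul, inv_mul_cancel₀ hcov.ne', one_smul]
end lat2
end DC

namespace DC
section lat3
set_option linter.unusedSectionVars false
variable {E H : Type*} [NormedAddCommGroup E] [NormedSpace ℝ E] [FiniteDimensional ℝ E]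
  [MeasureSpace E] [BorelSpace E] [(volume : Measure E).IsAddHaarMeasure]
  [NormedAddCommGroup H] [NormedSpace ℝ H] [FiniteDimensional ℝ H]
  [MeasureSpace H] [BorelSpace H] [(volume : Measure H).IsAddHaarMeasure]
  (L : Submodule ℤ (E × H)) [DiscreteTopology L] [IsZLattice ℝ L] {s : ℝ}

lemma wt_le_one (hs : 0 ≤ s) (u : H) : wt s u ≤ 1 := by
  unfold wt
  exact Real.rpow_le_one_of_one_le_of_nonpos (by linarith [norm_nonneg u]) (by linarith)

/-- lattice version of the finite autocorrelation coefficient -/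
noncomputable def eN (f : H → ℂ) (n : ℕ) (p : E × H) : ℂ :=
  (V E (n : ℝ))⁻¹ • ∑' q : L, psi f n (q : E × H) * (starRingEnd ℂ) (psi f n ((q : E × H) - p))

/-- lattice version of the limiting coefficient -/
noncomputable def eL (f : H → ℂ) (p : E × H) : ℂ :=
  (ZLattice.covolume L volume)⁻¹ • ∫ u, f u * (starRingEnd ℂ) (f (u - p.2))

lemma pair_bound (hs : 0 ≤ s) {f : H → ℂ} {C : ℝ} (hC : 0 ≤ C)
    (hf : ∀ u, ‖f u‖ ≤ C * wt s u) (n : ℕ) (q p : E × H) :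
    ‖psi f n q * (starRingEnd ℂ) (psi f n (q - p))‖ ≤
      (C * C * 2 ^ s * wt s p.2) *
        ((closedBall (0 : E) n).indicator (fun _ => wt s (q.2 - 0)) q.1 +
         (closedBall (0 : E) n).indicator (fun _ => wt s (q.2 - p.2)) q.1) := by
  have h0 := (wt_pos s p.2).le
  by_cases h1 : q.1 ∈ closedBall (0 : E) n
  · rw [Set.indicator_of_mem h1, Set.indicator_of_mem h1, sub_zero, norm_mul, RCLike.norm_conj]
    have e1 : ‖psi f n q‖ ≤ C * wt s q.2 := by
      simp only [psi]; rw [Set.indicator_of_mem h1]; exact hf _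
    have e2 : ‖psi f n (q - p)‖ ≤ C * wt s (q.2 - p.2) := by
      simp only [psi]
      exact (norm_indicator_le_norm_self (fun _ => f (q - p).2) _).trans (hf _)
    have := (wt_pos s q.2).le
    calc _ ≤ (C * wt s q.2) * (C * wt s (q.2 - p.2)) := by gcongr
      _ = C * C * (wt s q.2 * wt s (q.2 - p.2)) := by ring
      _ ≤ C * C * (2 ^ s * wt s p.2 * (wt s q.2 + wt s (q.2 - p.2))) := by
        exact mul_le_mul_of_nonneg_left (wt_mul hs _ _) (mul_nonneg hC hC)
      _ = _ := by ring
  · have : psi f n q = 0 := by simp only [psi]; rw [Set.indicator_of_notMem h1]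
    rw [this, zero_mul, norm_zero, Set.indicator_of_notMem h1, Set.indicator_of_notMem h1]
    simp

lemma pair_hasSum (hs : (Module.finrank ℝ H : ℝ) < s) (C : ℝ) (n : ℕ) (p : E × H) :
    HasSum (fun q : L => (C * C * 2 ^ s * wt s p.2) *
        ((closedBall (0 : E) n).indicator (fun _ => wt s (q.1.2 - 0)) q.1.1 +
         (closedBall (0 : E) n).indicator (fun _ => wt s (q.1.2 - p.2)) q.1.1))
      ((C * C * 2 ^ s * wt s p.2) *
        ((∑' q : L, (closedBall (0 : E) n).indicator (fun _ => wt s (q.1.2 - 0)) q.1.1) +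
         ∑' q : L, (closedBall (0 : E) n).indicator (fun _ => wt s (q.1.2 - p.2)) q.1.1)) :=
  ((summ L hs 0 (closedBall (0 : E) n) 0 n subset_rfl).hasSum.add
    (summ L hs p.2 (closedBall (0 : E) n) 0 n subset_rfl).hasSum).mul_left _

lemma eN_bound (hs : (Module.finrank ℝ H : ℝ) < s) {f : H → ℂ} {C : ℝ} (hC : 0 ≤ C)
    (hf : ∀ u, ‖f u‖ ≤ C * wt s u) :
    ∃ B : ℝ, 0 ≤ B ∧ ∀ᶠ n : ℕ in Filter.atTop, ∀ p : E × H, ‖eN L f n p‖ ≤ B * wt s p.2 := by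
  have hs0 : 0 ≤ s := le_trans (by positivity) hs.le
  obtain ⟨M, hM, h⟩ := bulk L hs
  refine ⟨C * C * 2 ^ s * (M + M), by positivity, ?_⟩
  filter_upwards [h] with n hn p
  have h1 := tsum_of_norm_bounded (pair_hasSum L hs C n p)
    (fun q : L => pair_bound hs0 hC hf n q p)
  have hV : 0 ≤ (V E (n : ℝ))⁻¹ := inv_nonneg.2 (V_nonneg _)
  have h0 := (wt_pos s p.2).le
  rw [eN, norm_smul, Real.norm_of_nonneg hV]
  calc _ ≤ _ := mul_le_mul_of_nonneg_left h1 hV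
    _ = (C * C * 2 ^ s * wt s p.2) * ((V E (n : ℝ))⁻¹ * (∑' q : L, (closedBall (0 : E) n).indicator
          (fun _ => wt s (q.1.2 - 0)) q.1.1) + (V E (n : ℝ))⁻¹ *
          ∑' q : L, (closedBall (0 : E) n).indicator (fun _ => wt s (q.1.2 - p.2)) q.1.1) := by ring
    _ ≤ (C * C * 2 ^ s * wt s p.2) * (M + M) := by gcongr <;> apply hn
    _ = _ := by ring

lemma pair_diff (hs : 0 ≤ s) {f : H → ℂ} {C : ℝ} (hC : 0 ≤ C)
    (hf : ∀ u, ‖f u‖ ≤ C * wt s u) (n : ℕ) (q p : E × H) :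
    ‖psi f n q * (starRingEnd ℂ) (psi f n (q - p)) -
      psi (fun u => f u * (starRingEnd ℂ) (f (u - p.2))) n (q + 0)‖ ≤
      (C * C) * (ann E n (‖p.1‖ + 1)).indicator (fun _ => wt s (q.2 - 0)) q.1 := by
  have i1 : 0 ≤ (ann E n (‖p.1‖ + 1)).indicator (fun _ => wt s (q.2 - 0)) q.1 :=
    Set.indicator_nonneg (fun _ _ => (wt_pos _ _).le) _
  rw [add_zero]
  simp only [psi, Prod.fst_sub, Prod.snd_sub]
  by_cases h1 : q.1 ∈ closedBall (0 : E) n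
  · by_cases h2 : q.1 - p.1 ∈ closedBall (0 : E) n
    · simp only [Set.indicator_of_mem h1, Set.indicator_of_mem h2, sub_self, norm_zero]
      positivity
    · have h3 : q.1 ∈ ann E n (‖p.1‖ + 1) := by
        have := norm_sub_le q.1 p.1
        simp only [ann, Set.mem_sdiff, mem_closedBall, dist_zero_right, not_le] at h1 h2 ⊢
        constructor <;> linarith [norm_nonneg p.1]
      simp only [Set.indicator_of_mem h1, Set.indicator_of_notMem h2, Set.indicator_of_mem h3]
      rw [map_zero, mul_zero, zero_sub, norm_neg, norm_mul, RCLike.norm_conj, sub_zero]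
      have := wt_le_one hs (q.2 - p.2)
      have := (wt_pos s q.2).le
      calc _ ≤ (C * wt s q.2) * (C * wt s (q.2 - p.2)) := by
            gcongr
            · exact hf _
            · exact hf _
        _ ≤ (C * wt s q.2) * (C * 1) := by gcongr
        _ = _ := by ring
  · simp only [Set.indicator_of_notMem h1, zero_mul, sub_self, norm_zero]
    positivity

lemma eN_tendsto (hs : (Module.finrank ℝ H : ℝ) < s)
    (hdense : Dense (Prod.snd '' (L : Set (E × H)))) {f : H → ℂ} (hc : Continuous f)
    {C : ℝ} (hC : 0 ≤ C) (hf : ∀ u, ‖f u‖ ≤ C * wt s u) (p : E × H) :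
    Filter.Tendsto (fun n => eN L f n p) Filter.atTop (nhds (eL L f p)) := by
  have hs0 : 0 < s := lt_of_le_of_lt (by positivity) hs
  set φ : H → ℂ := fun u => f u * (starRingEnd ℂ) (f (u - p.2)) with hφ
  have hφb : ∀ u, ‖φ u‖ ≤ (C * C) * wt s u := by
    intro u
    rw [hφ]; simp only [norm_mul, RCLike.norm_conj]
    have := wt_le_one hs0.le (u - p.2)
    have := (wt_pos s u).le
    calc _ ≤ (C * wt s u) * (C * wt s (u - p.2)) := by
          gcongr
          · exact hf _
          · exact hf _
      _ ≤ (C * wt s u) * (C * 1) := by gcongr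
      _ = _ := by ring
  have h1 : Filter.Tendsto (fun n => T L φ n (0 : E × H)) Filter.atTop (nhds (eL L f p)) := by
    refine equidist L hs hdense ?_ (mul_nonneg hC hC) hφb (modulus hs0 hc hC hf p.2)
    exact hc.mul (Complex.continuous_conj.comp (hc.comp (continuous_id.sub continuous_const)))
  have h2 : Filter.Tendsto (fun n => eN L f n p - T L φ n (0 : E × H)) Filter.atTop (nhds 0) := by
    have hb := (bdry L hs (‖p.1‖ + 1) (by positivity) (0 : H)).const_mul (C * C)
    rw [mul_zero] at hb
    refine squeeze_zero_norm (fun n => ?_) hb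
    have hV : 0 ≤ (V E (n : ℝ))⁻¹ := inv_nonneg.2 (V_nonneg _)
    have sN := Summable.of_norm_bounded (pair_hasSum L hs C n p).summable
      (fun q : L => pair_bound hs0.le hC hf n q p)
    have hsm : Summable (fun q : L => (ann E n (‖p.1‖ + 1)).indicator
        (fun _ => wt s (q.1.2 - 0)) q.1.1) :=
      summ L hs 0 (ann E n (‖p.1‖ + 1)) 0 (n + (‖p.1‖ + 1)) Set.sdiff_subset
    have hfin := tsum_of_norm_bounded (hsm.mul_left (C * C)).hasSum
      (fun q : L => pair_diff hs0.le hC hf n q p)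
    rw [tsum_mul_left] at hfin
    have sT := psi_summable L hs hφb n 0
    rw [sN.tsum_sub sT] at hfin
    rw [eN, T, ← smul_sub, norm_smul, Real.norm_of_nonneg hV, mul_left_comm]
    exact mul_le_mul_of_nonneg_left hfin hV
  simpa using h2.add h1

lemma eL_bound (hs : (Module.finrank ℝ H : ℝ) < s)
    (hdense : Dense (Prod.snd '' (L : Set (E × H)))) {f : H → ℂ} (hc : Continuous f)
    {C : ℝ} (hC : 0 ≤ C) (hf : ∀ u, ‖f u‖ ≤ C * wt s u) :
    ∃ B : ℝ, 0 ≤ B ∧ ∀ p : E × H, ‖eL L f p‖ ≤ B * wt s p.2 := by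
  obtain ⟨B, hB, h⟩ := eN_bound L hs hC hf
  refine ⟨B, hB, fun p => ?_⟩
  exact le_of_tendsto (eN_tendsto L hs hdense hc hC hf p).norm (h.mono fun n hn => hn p)

lemma vague (hs : (Module.finrank ℝ H : ℝ) < s)
    (hdense : Dense (Prod.snd '' (L : Set (E × H)))) {f : H → ℂ} (hc : Continuous f)
    {C : ℝ} (hC : 0 ≤ C) (hf : ∀ u, ‖f u‖ ≤ C * wt s u) {g : E → ℂ} (hg : Continuous g)
    (hgc : HasCompactSupport g) :
    Filter.Tendsto (fun n => ∑' p : L, eN L f n (p : E × H) * g p.1.1) Filter.atTop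
      (nhds (∑' p : L, eL L f (p : E × H) * g p.1.1)) := by
  obtain ⟨B, hB, h⟩ := eN_bound L hs hC hf
  obtain ⟨G, hG⟩ := hgc.exists_bound_of_continuous hg
  obtain ⟨ρ, hρ⟩ := hgc.isCompact.isBounded.subset_closedBall (0 : E)
  have hG0 : 0 ≤ G := (norm_nonneg _).trans (hG 0)
  refine tendsto_tsum_of_dominated_convergence
    ((summ L hs 0 (closedBall (0 : E) ρ) 0 ρ subset_rfl).mul_left (B * G))
    (fun p => (eN_tendsto L hs hdense hc hC hf p).mul_const _) ?_
  filter_upwards [h] with n hn p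
  have hw := (wt_pos s p.1.2).le
  by_cases hp : p.1.1 ∈ closedBall (0 : E) ρ
  · rw [Set.indicator_of_mem hp, norm_mul, sub_zero]
    calc _ ≤ (B * wt s p.1.2) * G := by
          gcongr
          · exact hn _
          · exact hG _
      _ = _ := by ring
  · have : g p.1.1 = 0 := by
      by_contra h0
      exact hp (hρ (subset_tsupport _ h0))
    rw [this, Set.indicator_of_notMem hp]
    simp

open scoped ComplexOrder

/-- the function `g * g~` -/
noncomputable def gg (g : E → ℂ) (z : E) : ℂ := ∫ t, g t * (starRingEnd ℂ) (g (t - z))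

lemma gg_cont {g : E → ℂ} (hg : Continuous g) (hgc : HasCompactSupport g) :
    Continuous (gg g) ∧ HasCompactSupport (gg g) := by
  let g' : E → ℂ := fun x => (starRingEnd ℂ) (g (-x))
  have hg' : Continuous g' := Complex.continuous_conj.comp (hg.comp continuous_neg)
  have hgc' : HasCompactSupport g' := by
    have h1 : HasCompactSupport (fun x => g (-x)) := hgc.comp_homeomorph (Homeomorph.neg E)
    exact h1.comp_left (map_zero _)
  have e : gg g = convolution g g' (ContinuousLinearMap.mul ℝ ℂ) volume := by
    ext z
    simp [gg, convolution, g']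
  rw [e]
  exact ⟨hgc'.continuous_convolution_right _ (hg.locallyIntegrable) hg',
    HasCompactSupport.convolution _ hgc hgc'⟩

lemma gg_finite {g : E → ℂ} (hg : Continuous g) (hgc : HasCompactSupport g) {ι : Type*}
    (S : Finset ι) (c : ι → ℂ) (x : ι → E) :
    0 ≤ ∑ i ∈ S ×ˢ S, c i.1 * (starRingEnd ℂ) (c i.2) * gg g (x i.1 - x i.2) := by
  have hint : ∀ i j : ι, Integrable (fun t => g (t + x i) * (starRingEnd ℂ) (g (t + x j)))
      volume := by
    intro i j
    refine Continuous.integrable_of_hasCompactSupport ?_ ?_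
    · exact (hg.comp (continuous_id.add continuous_const)).mul
        (Complex.continuous_conj.comp (hg.comp (continuous_id.add continuous_const)))
    · have h1 : HasCompactSupport (fun t => g (t + x i)) :=
        hgc.comp_homeomorph (Homeomorph.addRight (x i))
      exact h1.mul_right
  have hgg : ∀ i j : ι, gg g (x i - x j) = ∫ t, g (t + x i) * (starRingEnd ℂ) (g (t + x j)) := by
    intro i j
    rw [gg, ← integral_add_right_eq_self _ (x i)]
    congr 1
    ext t
    congr 3
    abel
  have : ∑ i ∈ S ×ˢ S, c i.1 * (starRingEnd ℂ) (c i.2) * gg g (x i.1 - x i.2) =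
      ∫ t, ((Complex.normSq (∑ i ∈ S, c i * g (t + x i)) : ℝ) : ℂ) := by
    simp_rw [hgg, ← integral_const_mul]
    rw [← integral_finsetSum _ (fun i _ => (hint _ _).const_mul _)]
    congr 1
    ext t
    rw [← Complex.mul_conj, map_sum, Finset.sum_mul_sum, ← Finset.sum_product']
    refine Finset.sum_congr rfl fun i _ => ?_
    rw [map_mul]; ring
  rw [this, integral_complex_ofReal]
  exact_mod_cast integral_nonneg fun t => Complex.normSq_nonneg _

lemma gg_infinite {g : E → ℂ} (hg : Continuous g) (hgc : HasCompactSupport g) {ι : Type*}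
    (c : ι → ℂ) (hc : Summable fun i => ‖c i‖) (x : ι → E) :
    (Summable fun i : ι × ι => c i.1 * (starRingEnd ℂ) (c i.2) * gg g (x i.1 - x i.2)) ∧
    0 ≤ ∑' i : ι × ι, c i.1 * (starRingEnd ℂ) (c i.2) * gg g (x i.1 - x i.2) := by
  classical
  obtain ⟨h1, h2⟩ := gg_cont hg hgc
  obtain ⟨G, hG⟩ := h2.exists_bound_of_continuous h1
  have hS : Summable fun i : ι × ι => c i.1 * (starRingEnd ℂ) (c i.2) * gg g (x i.1 - x i.2) := by
    have h3 : Summable fun i : ι × ι => ‖c i.1‖ * ‖c i.2‖ :=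
      hc.mul_of_nonneg hc (fun _ => norm_nonneg _) (fun _ => norm_nonneg _)
    refine Summable.of_norm_bounded (h3.mul_right G) fun i => ?_
    rw [norm_mul, norm_mul, RCLike.norm_conj]
    gcongr
    exact hG _
  refine ⟨hS, ?_⟩
  have ht : Filter.Tendsto (fun S : Finset ι => S ×ˢ S) Filter.atTop Filter.atTop := by
    rw [Filter.tendsto_atTop]
    intro U
    filter_upwards [Filter.eventually_ge_atTop (U.image Prod.fst ∪ U.image Prod.snd)] with S hS
    intro i hi
    rw [Finset.mem_product]
    exact ⟨hS (Finset.mem_union_left _ (Finset.mem_image_of_mem _ hi)),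
      hS (Finset.mem_union_right _ (Finset.mem_image_of_mem _ hi))⟩
  have hlim := hS.hasSum.comp ht
  exact ge_of_tendsto hlim (Filter.Eventually.of_forall fun S => gg_finite hg hgc S c x)

/-- reindexing of pairs -/
def pairEquiv (G : Type*) [AddCommGroup G] : G × G ≃ G × G where
  toFun i := (i.2, i.2 - i.1)
  invFun i := (i.1 - i.2, i.1)
  left_inv i := by simp
  right_inv i := by simp

lemma eN_pos (hs : (Module.finrank ℝ H : ℝ) < s) {f : H → ℂ}
    {C : ℝ} (hf : ∀ u, ‖f u‖ ≤ C * wt s u) {g : E → ℂ} (hg : Continuous g)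
    (hgc : HasCompactSupport g) (n : ℕ) :
    0 ≤ ∑' p : L, eN L f n (p : E × H) * gg g p.1.1 := by
  have hc : Summable fun q : L => ‖psi f n (q : E × H)‖ := by
    simpa using (psi_summable L hs hf n 0).norm
  obtain ⟨h1, h2⟩ := gg_infinite hg hgc (fun q : L => psi f n (q : E × H)) hc (fun q => q.1.1)
  rw [← (pairEquiv L).summable_iff] at h1
  rw [← (pairEquiv L).tsum_eq] at h2
  have h3 := h1.tsum_prod
  simp only [Function.comp_apply] at h3
  rw [h3] at h2
  have e : ∑' p : L, eN L f n (p : E × H) * gg g p.1.1 = (V E (n : ℝ))⁻¹ • ∑' (p : L) (q : L),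
      psi f n (q : E × H) * (starRingEnd ℂ) (psi f n ((q - p : L) : E × H)) *
        gg g (q.1.1 - (q - p).1.1) := by
    rw [← tsum_const_smul'']
    congr 1
    ext p
    rw [eN, smul_mul_assoc, ← tsum_mul_right]
    congr 2
    ext q
    simp
  rw [e]
  exact smul_nonneg (inv_nonneg.2 (V_nonneg _)) h2

lemma eL_pos (hs : (Module.finrank ℝ H : ℝ) < s)
    (hdense : Dense (Prod.snd '' (L : Set (E × H)))) {f : H → ℂ} (hc : Continuous f)
    {C : ℝ} (hC : 0 ≤ C) (hf : ∀ u, ‖f u‖ ≤ C * wt s u) {g : E → ℂ} (hg : Continuous g)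
    (hgc : HasCompactSupport g) :
    0 ≤ ∑' p : L, eL L f (p : E × H) * gg g p.1.1 := by
  obtain ⟨h1, h2⟩ := gg_cont hg hgc
  exact ge_of_tendsto (vague L hs hdense hc hC hf h1 h2)
    (Filter.Eventually.of_forall fun n => eN_pos L hs hf hg hgc n)

end lat3
end DC

/-- the finite autocorrelations γ_ω^{(n)} = ∑_{z∈L} η_n(z) δ_z of the
dense Dirac comb converge vaguely to the unique autocorrelation
γ_ω = ∑_{z∈L} η(z) δ_z (a pure point measure by this very form), which is
translation bounded and positive definite. -/
theorem dense_comb_autocorrelation (d m : ℕ)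
    (L : Submodule ℤ (EuclideanSpace ℝ (Fin d) × EuclideanSpace ℝ (Fin m)))
    [DiscreteTopology L] [IsZLattice ℝ L]
    (hinj1 : Set.InjOn Prod.fst (L : Set (EuclideanSpace ℝ (Fin d) × EuclideanSpace ℝ (Fin m))))
    (hdense1 : Dense (physL d m L))
    (hinj2 : Set.InjOn Prod.snd (L : Set (EuclideanSpace ℝ (Fin d) × EuclideanSpace ℝ (Fin m))))
    (hdense2 : Dense (Prod.snd '' (L : Set (EuclideanSpace ℝ (Fin d) × EuclideanSpace ℝ (Fin m)))))
    (star : EuclideanSpace ℝ (Fin d) → EuclideanSpace ℝ (Fin m))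
    (hstar : ∀ p ∈ L, star (Prod.fst p) = Prod.snd p)
    (f : EuclideanSpace ℝ (Fin m) → ℂ) (hf : Continuous f)
    (C α : ℝ) (hC : 0 < C) (hα : 0 < α)
    (hdecay : ∀ x : EuclideanSpace ℝ (Fin m), ‖x‖ ^ ((m : ℝ) + 1 + α) * ‖f x‖ ≤ C) :
    -- vague convergence γ_ω^{(n)} → γ_ω = ∑_{z ∈ L} η(z) δ_z
    (∀ g : EuclideanSpace ℝ (Fin d) → ℂ, Continuous g → HasCompactSupport g →
      Filter.Tendsto
        (fun n : ℕ => ∑' z : physL d m L,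
          etaN d m L star f n (z : EuclideanSpace ℝ (Fin d)) * g (z : EuclideanSpace ℝ (Fin d)))
        Filter.atTop
        (nhds (∑' z : physL d m L,
          etaLim d m L star f (z : EuclideanSpace ℝ (Fin d)) * g (z : EuclideanSpace ℝ (Fin d))))) ∧
    -- γ_ω is translation bounded
    (∀ K : Set (EuclideanSpace ℝ (Fin d)), IsCompact K → ∃ B : ℝ,
      ∀ y : EuclideanSpace ℝ (Fin d),
        (Summable fun z : ((physL d m L ∩ {w | w - y ∈ K} : Set (EuclideanSpace ℝ (Fin d)))) =>
          ‖etaLim d m L star f (z : EuclideanSpace ℝ (Fin d))‖) ∧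
        (∑' z : ((physL d m L ∩ {w | w - y ∈ K} : Set (EuclideanSpace ℝ (Fin d)))),
          ‖etaLim d m L star f (z : EuclideanSpace ℝ (Fin d))‖) ≤ B) ∧
    -- γ_ω is positive definite: γ_ω(g ∗ g̃) ≥ 0
    (∀ g : EuclideanSpace ℝ (Fin d) → ℂ, Continuous g → HasCompactSupport g →
      ((∑' z : physL d m L, etaLim d m L star f (z : EuclideanSpace ℝ (Fin d)) *
          ∫ t, g t * (starRingEnd ℂ) (g (t - (z : EuclideanSpace ℝ (Fin d))))).im = 0 ∧
      0 ≤ (∑' z : physL d m L, etaLim d m L star f (z : EuclideanSpace ℝ (Fin d)) *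
          ∫ t, g t * (starRingEnd ℂ) (g (t - (z : EuclideanSpace ℝ (Fin d))))).re)) := by
  have hs : (Module.finrank ℝ (EuclideanSpace ℝ (Fin m)) : ℝ) < (m : ℝ) + 1 + α := by
    rw [finrank_euclideanSpace_fin]; linarith
  have hs0 : 0 ≤ (m : ℝ) + 1 + α := by positivity
  obtain ⟨C', hC', hfb⟩ := DC.decay_bound hs0 hf hdecay
  set s : ℝ := (m : ℝ) + 1 + α with hsdef
  have hinj : Function.Injective (fun q : L => q.1.1) := by
    intro a b hab
    exact Subtype.ext (hinj1 a.2 b.2 hab)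
  have hrange : ∀ x, x ∈ physL d m L ↔ x ∈ Set.range (fun q : L => q.1.1) := by
    intro x
    constructor
    · rintro ⟨q, hq, rfl⟩
      exact ⟨⟨q, hq⟩, rfl⟩
    · rintro ⟨q, rfl⟩
      exact ⟨q.1, q.2, rfl⟩
  let e : L ≃ physL d m L := Equiv.ofBijective
    (fun q => ⟨q.1.1, (hrange _).2 ⟨q, rfl⟩⟩)
    ⟨fun a b hab => hinj (congrArg Subtype.val hab), fun x => by
      obtain ⟨q, hq⟩ := (hrange _).1 x.2
      exact ⟨q, Subtype.ext hq⟩⟩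
  have htsum : ∀ F : EuclideanSpace ℝ (Fin d) → ℂ,
      ∑' z : physL d m L, F z = ∑' p : L, F p.1.1 := by
    intro F
    exact (e.tsum_eq (fun z : physL d m L => F z)).symm
  have hLim : ∀ p : L, etaLim d m L star f p.1.1 = DC.eL L f p.1 := by
    intro p
    unfold etaLim DC.eL
    rw [hstar p.1 p.2]
  have hN : ∀ (n : ℕ) (p : L), etaN d m L star f n p.1.1 = DC.eN L f n p.1 := by
    intro n p
    unfold etaN DC.eN DC.V
    congr 1
    rw [tsum_subtype _ (fun x : EuclideanSpace ℝ (Fin d) =>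
      f (star x) * (starRingEnd ℂ) (f (star (x - p.1.1)))), ← hinj.tsum_eq]
    · congr 1
      ext q
      have hq1 : q.1.1 ∈ physL d m L := (hrange _).2 ⟨q, rfl⟩
      have hq2 : q.1.1 - p.1.1 ∈ physL d m L := (hrange _).2 ⟨q - p, rfl⟩
      have hs2 : star (q.1.1 - p.1.1) = q.1.2 - p.1.2 := hstar (q.1 - p.1) (q - p).2
      simp only [DC.psi, Prod.fst_sub, Prod.snd_sub]
      by_cases a1 : q.1.1 ∈ closedBall (0 : EuclideanSpace ℝ (Fin d)) n
      · by_cases a2 : q.1.1 - p.1.1 ∈ closedBall (0 : EuclideanSpace ℝ (Fin d)) n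
        · rw [Set.indicator_of_mem a1, Set.indicator_of_mem a2]
          refine (Set.indicator_of_mem (show _ ∈ {x | x ∈ physL d m L ∧
            x ∈ closedBall (0 : EuclideanSpace ℝ (Fin d)) n ∧ x - p.1.1 ∈ physL d m L ∧
            x - p.1.1 ∈ closedBall (0 : EuclideanSpace ℝ (Fin d)) n} from ⟨hq1, a1, hq2, a2⟩)
            _).trans ?_
          rw [hs2, hstar q.1 q.2]
        · rw [Set.indicator_of_notMem a2, map_zero, mul_zero]
          exact Set.indicator_of_notMem (fun h => a2 h.2.2.2) _
      · rw [Set.indicator_of_notMem a1, zero_mul]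
        exact Set.indicator_of_notMem (fun h => a1 h.2.1) _
    · intro x hx
      have := Set.mem_of_indicator_ne_zero hx
      exact (hrange _).1 this.1
  refine ⟨?_, ?_, ?_⟩
  · intro g hg hgc
    have h := DC.vague L hs hdense2 hf hC' hfb hg hgc
    rw [htsum (fun z => etaLim d m L star f z * g z)]
    simp_rw [hLim]
    refine h.congr (fun n => ?_)
    rw [htsum (fun z => etaN d m L star f n z * g z)]
    simp_rw [hN]
  · intro K hK
    obtain ⟨B, hB, hb⟩ := DC.eL_bound L hs hdense2 hf hC' hfb
    obtain ⟨ρ, hρ⟩ := hK.isBounded.subset_closedBall (0 : EuclideanSpace ℝ (Fin d))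
    obtain ⟨M, hM⟩ := DC.transl L hs ρ
    refine ⟨B * M, fun y => ?_⟩
    set Q : Set (EuclideanSpace ℝ (Fin d)) := physL d m L ∩ {w | w - y ∈ K} with hQ
    set F : EuclideanSpace ℝ (Fin d) → ℝ := fun z => ‖etaLim d m L star f z‖ with hF
    have hle : ∀ q : L, ‖Q.indicator F q.1.1‖ ≤ B * (closedBall y ρ).indicator
        (fun _ => DC.wt s (q.1.2 - 0)) q.1.1 := by
      intro q
      by_cases hq : q.1.1 ∈ Q
      · have h1 : q.1.1 ∈ closedBall y ρ := by
          have := hρ hq.2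
          simpa [mem_closedBall, dist_eq_norm] using this
        rw [Set.indicator_of_mem hq, Set.indicator_of_mem h1, sub_zero, hF]
        simp only [hLim, norm_norm]
        exact hb _
      · rw [Set.indicator_of_notMem hq, norm_zero]
        exact mul_nonneg hB (Set.indicator_nonneg (fun _ _ => (DC.wt_pos _ _).le) _)
    have hsm := (DC.summ L hs 0 (closedBall y ρ) y ρ subset_rfl).mul_left B
    have hout : ∀ x, x ∉ Set.range (fun q : L => q.1.1) → Q.indicator F x = 0 := by
      intro x hx
      exact Set.indicator_of_notMem (fun h => hx ((hrange _).1 h.1)) _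
    constructor
    · have h1 : Summable (Q.indicator F) :=
        (hinj.summable_iff hout).1 (Summable.of_norm_bounded hsm hle)
      exact summable_subtype_iff_indicator.2 h1
    · rw [tsum_subtype Q F, ← hinj.tsum_eq (Function.support_subset_iff'.2 hout)]
      have h1 := tsum_of_norm_bounded hsm.hasSum hle
      rw [tsum_mul_left] at h1
      exact (le_abs_self _).trans (h1.trans (mul_le_mul_of_nonneg_left (hM y 0) hB))
  · intro g hg hgc
    have h := DC.eL_pos L hs hdense2 hf hC' hfb hg hgc
    rw [htsum (fun z => etaLim d m L star f z * ∫ t, g t * (starRingEnd ℂ) (g (t - z)))]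
    simp_rw [hLim]
    rw [Complex.le_def] at h
    exact ⟨h.2.symm, h.1⟩
end

section
/- Generalized Poisson summation formula on a dense ℤ-module: under the dense cut-and-project hypotheses with f : ℝ^m → ℂ continuous and |x|^{m+1+α}|f(x)| ≤ C, the distributional Fourier transform identity (∑_{z ∈ L} η(z) δ_z)^ = ∑_{k ∈ L*} |c(k)|² δ_k holds, where η(z) = (1/|det L̃|) ∫_{ℝ^m} f(u) conj(f(u−z*)) du and c(k) = (1/|det L̃|) f̂(−k*) for k ∈ L*. -/
open MeasureTheory Metric
open scoped RealInnerProductSpace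

/-- The dual lattice of L̃ in ℝ^d × ℝ^m, w.r.t. the Euclidean pairing of the product. -/
def dualL (d m : ℕ) (L : Submodule ℤ (EuclideanSpace ℝ (Fin d) × EuclideanSpace ℝ (Fin m))) :
    Set (EuclideanSpace ℝ (Fin d) × EuclideanSpace ℝ (Fin m)) :=
  {y | ∀ x ∈ L, ∃ n : ℤ, ⟪y.1, x.1⟫ + ⟪y.2, x.2⟫ = (n : ℝ)}

/-- The diffraction intensity |c(k)|² = (1/|det L̃|²)|f̂(−k*)|² at k ∈ L*. -/
noncomputable def intensity (d m : ℕ)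
    (L : Submodule ℤ (EuclideanSpace ℝ (Fin d) × EuclideanSpace ℝ (Fin m)))
    (starD : EuclideanSpace ℝ (Fin d) → EuclideanSpace ℝ (Fin m))
    (f : EuclideanSpace ℝ (Fin m) → ℂ) (k : EuclideanSpace ℝ (Fin d)) : ℝ :=
  ((ZLattice.covolume L volume)⁻¹) ^ 2 *
    ‖∫ u, Complex.exp (2 * Real.pi * Complex.I * ((⟪starD k, u⟫ : ℝ) : ℂ)) * f u‖ ^ 2

namespace GPS

set_option linter.unusedSectionVars false

/-- The integer vector `n` as a real vector. -/
def zc {ι : Type*} (n : ι → ℤ) : ι → ℝ := fun i => (n i : ℝ)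

/-- Half-open unit cube. -/
def cube (ι : Type*) : Set (ι → ℝ) := {x | ∀ i, x i ∈ Set.Ioc ((0 : ι → ℝ) i) ((0 : ι → ℝ) i + 1)}

lemma measurableSet_cube {ι : Type*} [Fintype ι] : MeasurableSet (cube ι) :=
  MeasurableSet.univ_pi' (fun _ => measurableSet_Ioc)

lemma hasSum_cube {ι : Type*} [Fintype ι] {E : Type*} [NormedAddCommGroup E] [NormedSpace ℝ E]
    (F : (ι → ℝ) → E) (hF : Integrable F) :
    HasSum (fun n : ι → ℤ => ∫ t in cube ι, F (t + zc n)) (∫ t, F t) := by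
  have hS : ∀ n : ι → ℤ, ((fun t => t + zc n) ⁻¹' {x : ι → ℝ | ∀ i, x i ∈ Set.Ioc (n i : ℝ) (n i + 1)})
      = cube ι := by
    intro n
    ext x
    simp only [cube, zc, Set.mem_preimage, Set.mem_ofPred_eq, Set.mem_Ioc, Pi.add_apply, Pi.zero_apply]
    refine forall_congr' fun i => ?_
    constructor <;> rintro ⟨h1, h2⟩ <;> constructor <;> linarith
  have h := hasSum_integral_iUnion (μ := volume) (f := F)
    (s := fun n : ι → ℤ => {x : ι → ℝ | ∀ i, x i ∈ Set.Ioc (n i : ℝ) (n i + 1)})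
    (fun n => MeasurableSet.univ_pi' (fun _ => measurableSet_Ioc)) ?_ hF.integrableOn
  · have hU : (⋃ n : ι → ℤ, {x : ι → ℝ | ∀ i, x i ∈ Set.Ioc (n i : ℝ) (n i + 1)}) = Set.univ := by
      refine Set.eq_univ_of_forall fun x => Set.mem_iUnion.2 ⟨fun i => ⌈x i⌉ - 1, fun i => ?_⟩
      have h1 := Int.ceil_lt_add_one (x i)
      have h2 := Int.le_ceil (x i)
      push_cast
      constructor <;> linarith
    rw [hU, setIntegral_univ] at h
    refine h.congr_fun ?_ |> fun h => h
    intro n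
    have := (measurePreserving_add_right (volume : Measure (ι → ℝ)) (zc n)).setIntegral_preimage_emb
      (MeasurableEquiv.addRight (zc n)).measurableEmbedding F
        {x : ι → ℝ | ∀ i, x i ∈ Set.Ioc (n i : ℝ) (n i + 1)}
    rw [← this, hS]
  · intro n k hnk
    refine Set.disjoint_left.2 fun x hx hx' => hnk ?_
    funext i
    have h1 := hx i
    have h2 := hx' i
    have a1 : (n i : ℝ) < k i + 1 := h1.1.trans_le h2.2
    have a2 : (k i : ℝ) < n i + 1 := h2.1.trans_le h1.2
    norm_cast at a1 a2
    lia

/-- Regular integrable majorants. -/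
structure Reg {ι : Type*} [Fintype ι] (H : (ι → ℝ) → ℝ) : Prop where
  int : Integrable H
  reg : ∀ R : ℝ, ∃ C : ℝ, 0 ≤ C ∧ ∀ t v : ι → ℝ, ‖v‖ ≤ R → H (t + v) ≤ C * H t

lemma Reg.nonneg {ι : Type*} [Fintype ι] {H : (ι → ℝ) → ℝ} (_ : Reg H)
    {G : (ι → ℝ) → ℂ} (hGH : ∀ t, ‖G t‖ ≤ H t) (t) : 0 ≤ H t := (norm_nonneg _).trans (hGH t)

lemma cube_norm {ι : Type*} [Fintype ι] {t : ι → ℝ} (ht : t ∈ cube ι) : ‖t‖ ≤ 1 := by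
  refine (pi_norm_le_iff_of_nonneg zero_le_one).2 fun i => ?_
  have := ht i
  simp only [Pi.zero_apply, Set.mem_Ioc] at this
  rw [Real.norm_eq_abs, abs_le]
  constructor <;> linarith

lemma volume_cube {ι : Type*} [Fintype ι] : volume (cube ι) = 1 := by
  have : cube ι = Set.pi Set.univ (fun _ => Set.Ioc (0:ℝ) 1) := by
    ext x; simp [cube]
  rw [this, volume_pi_pi]
  simp

lemma Reg.summable {ι : Type*} [Fintype ι] {H : (ι → ℝ) → ℝ} (h : Reg H) (h0 : ∀ t, 0 ≤ H t) :
    Summable fun n : ι → ℤ => H (zc n) := by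
  obtain ⟨C, hC, hreg⟩ := h.reg 1
  have hs := ((hasSum_cube H h.int).summable).mul_left C
  refine Summable.of_nonneg_of_le (fun _ => h0 _) (fun n => ?_) hs
  have : H (zc n) = ∫ t in cube ι, H (zc n) := by
    simp [Measure.real, volume_cube]
  rw [this, ← integral_const_mul]
  refine setIntegral_mono_on ?_ ?_ measurableSet_cube ?_
  · exact integrableOn_const (by simp [volume_cube])
  · exact ((h.int.comp_add_right (zc n)).const_mul C).integrableOn
  · intro t ht
    have := hreg (t + zc n) (-t) (by rw [norm_neg]; exact cube_norm ht)
    rwa [add_neg_cancel_comm] at this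

section torus
variable {ι : Type*} [Fintype ι] {H : (ι → ℝ) → ℝ} {G : (ι → ℝ) → ℂ}

/-- Periodization. -/
noncomputable def per (G : (ι → ℝ) → ℂ) (t : ι → ℝ) : ℂ := ∑' n : ι → ℤ, G (t + zc n)

lemma per_summable (h : Reg H) (hGH : ∀ t, ‖G t‖ ≤ H t) (R : ℝ) :
    ∃ u : (ι → ℤ) → ℝ, Summable u ∧ ∀ n t, ‖t‖ ≤ R → ‖G (t + zc n)‖ ≤ u n := by
  obtain ⟨C, hC, hreg⟩ := h.reg R
  refine ⟨_, (h.summable (h.nonneg hGH)).mul_left C, fun n t ht => ?_⟩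
  rw [add_comm]
  exact (hGH _).trans (hreg _ _ ht)

lemma per_continuous (h : Reg H) (hGH : ∀ t, ‖G t‖ ≤ H t) (hG : Continuous G) :
    Continuous (per G) := by
  rw [continuous_iff_continuousAt]
  intro t
  obtain ⟨u, hu, hb⟩ := per_summable h hGH (‖t‖ + 1)
  have : ContinuousOn (per G) (ball 0 (‖t‖ + 1)) := by
    refine continuousOn_tsum (fun n => (hG.comp (continuous_add_const _)).continuousOn) hu ?_
    intro n x hx
    exact hb n x (by simpa using (mem_ball_zero_iff.1 hx).le)
  exact this.continuousAt (isOpen_ball.mem_nhds (by simp))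

lemma per_add (k : ι → ℤ) (t : ι → ℝ) : per G (t + zc k) = per G t := by
  unfold per
  rw [← (Equiv.addLeft k).tsum_eq (fun n => G (t + zc n))]
  refine tsum_congr fun n => ?_
  congr 1
  ext i
  simp [zc]; ring

/-- The projection to the torus. -/
def toT (t : ι → ℝ) : UnitAddTorus ι := fun i => (t i : UnitAddCircle)

lemma toT_quot : IsOpenQuotientMap (toT (ι := ι)) := 
  IsOpenQuotientMap.piMap (f := fun (_ : ι) (x : ℝ) => (x : UnitAddCircle))
    (fun _ => QuotientAddGroup.isOpenQuotientMap_mk)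

lemma exists_torus (h : Reg H) (hGH : ∀ t, ‖G t‖ ≤ H t) (hG : Continuous G) :
    ∃ P : C(UnitAddTorus ι, ℂ), ∀ t, P (toT t) = per G t := by
  have hkey : ∀ s t : ι → ℝ, toT s = toT t → per G s = per G t := by
    intro s t hst
    have : ∀ i, ∃ k : ℤ, s i = t i + k := by
      intro i
      have := congrFun hst i
      simp only [toT] at this
      rw [← sub_eq_zero, ← AddCircle.coe_sub, AddCircle.coe_eq_zero_iff] at this
      obtain ⟨k, hk⟩ := this
      exact ⟨k, by simp at hk; linarith⟩
    choose k hk using this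
    rw [← per_add k t]
    congr 1
    ext i
    simp [zc, hk i]
  let P : UnitAddTorus ι → ℂ := fun x => per G (Function.surjInv toT_quot.surjective x)
  have hP : ∀ t, P (toT t) = per G t := fun t => hkey _ _ (Function.surjInv_eq _ _)
  refine ⟨⟨P, ?_⟩, hP⟩
  rw [toT_quot.isQuotientMap.continuous_iff]
  have : P ∘ toT = per G := funext hP
  rw [this]
  exact per_continuous h hGH hG

/-- character -/
noncomputable def ch (n : ι → ℤ) (t : ι → ℝ) : ℂ :=
  Complex.exp (-(2 * Real.pi * Complex.I * ((∑ i, (n i : ℝ) * t i : ℝ) : ℂ)))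

lemma mFourier_toT (n : ι → ℤ) (t : ι → ℝ) : UnitAddTorus.mFourier (-n) (toT t) = ch n t := by
  simp only [UnitAddTorus.mFourier, toT, ch, ContinuousMap.coe_mk, fourier_coe_apply]
  rw [← Complex.exp_sum]
  congr 1
  push_cast
  rw [Finset.mul_sum, ← Finset.sum_neg_distrib]
  refine Finset.sum_congr rfl fun i _ => ?_
  simp; ring

lemma toT_add (t : ι → ℝ) (k : ι → ℤ) : toT (t + zc k) = toT t := by
  ext i
  simp only [toT, zc, Pi.add_apply, AddCircle.coe_add]
  rw [add_eq_left]
  exact AddCircle.coe_eq_zero_iff _ |>.2 ⟨k i, by simp⟩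

lemma ch_continuous (n : ι → ℤ) : Continuous (ch n) := by unfold ch; fun_prop

lemma norm_ch (n : ι → ℤ) (t) : ‖ch n t‖ = 1 := by
  unfold ch
  rw [Complex.norm_exp]
  simp

lemma coeff (h : Reg H) (hGH : ∀ t, ‖G t‖ ≤ H t) (hG : Continuous G)
    (P : C(UnitAddTorus ι, ℂ)) (hP : ∀ t, P (toT t) = per G t) (n : ι → ℤ) :
    UnitAddTorus.mFourierCoeff P n = ∫ t, ch n t * G t := by
  rw [UnitAddTorus.mFourierCoeff_eq_integral _ _ 0]
  change ∫ x in cube ι, UnitAddTorus.mFourier (-n) (toT x) • P (toT x) = _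
  have hGi : Integrable G := h.int.mono' hG.aestronglyMeasurable (Filter.Eventually.of_forall hGH)
  have hint : Integrable (fun t => ch n t * G t) := by
    refine hGi.norm.mono' ((ch_continuous n).mul hG).aestronglyMeasurable ?_
    filter_upwards with t
    simp [norm_ch]
  have hch : ∀ (k : ι → ℤ) t, ch n (t + zc k) = ch n t := by
    intro k t
    rw [← mFourier_toT, ← mFourier_toT, toT_add]
  rw [← (hasSum_cube _ hint).tsum_eq]
  obtain ⟨u, hu, hb⟩ := per_summable h hGH 1
  rw [integral_tsum_of_summable_integral_norm (μ := volume.restrict (cube ι))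
    (F := fun (k : ι → ℤ) t => ch n (t + zc k) * G (t + zc k))]
  · refine integral_congr_ae ?_
    filter_upwards with t
    rw [mFourier_toT, hP, per, smul_eq_mul, ← tsum_mul_left]
    simp only [hch]
  · intro k
    exact (hint.comp_add_right (zc k)).integrableOn
  · have h1 := (hasSum_cube _ hGi.norm).summable
    refine h1.congr fun k => ?_
    simp [norm_ch]

lemma parseval (h : Reg H) (hGH : ∀ t, ‖G t‖ ≤ H t) (hG : Continuous G) :
    Summable fun n : ι → ℤ => ‖∫ t, ch n t * G t‖ ^ 2 := by
  obtain ⟨P, hP⟩ := exists_torus h hGH hG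
  simp_rw [← coeff h hGH hG P hP, ← UnitAddTorus.mFourierCoeff_toLp P]
  exact (UnitAddTorus.hasSum_sq_mFourierCoeff _).summable

lemma poisson (h : Reg H) (hGH : ∀ t, ‖G t‖ ≤ H t) (hG : Continuous G)
    (hs : Summable fun n : ι → ℤ => ∫ t, ch n t * G t) :
    ∑' n : ι → ℤ, G (zc n) = ∑' n : ι → ℤ, ∫ t, ch n t * G t := by
  obtain ⟨P, hP⟩ := exists_torus h hGH hG
  simp_rw [← coeff h hGH hG P hP] at hs ⊢
  have := UnitAddTorus.hasSum_mFourier_series_apply_of_summable hs (toT 0)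
  rw [hP] at this
  simp only [per, zero_add] at this
  rw [← this.tsum_eq]
  refine tsum_congr fun n => ?_
  rw [← neg_neg n, mFourier_toT]
  simp [ch]
end torus
section lattice

lemma integral_T {V : Type*} [NormedAddCommGroup V] [NormedSpace ℝ V] [FiniteDimensional ℝ V]
    [MeasurableSpace V] [BorelSpace V] (μ : Measure V) [μ.IsAddHaarMeasure]
    (L : Submodule ℤ V) [DiscreteTopology L] [IsZLattice ℝ L] {ι : Type*} [Fintype ι]
    (b : Module.Basis ι ℤ L) :
    MeasureTheory.Measure.map (b.ofZLatticeBasis ℝ L).equivFunL.symm volume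
      = ENNReal.ofReal (ZLattice.covolume L μ)⁻¹ • μ := by
  set B := b.ofZLatticeBasis ℝ L with hB
  set T := B.equivFunL.symm with hT
  have : (Measure.map T volume).IsAddHaarMeasure :=
    T.isAddHaarMeasure_map volume
  have h1 := Measure.isAddLeftInvariant_eq_smul (Measure.map T volume) μ
  set c := (Measure.map T volume).addHaarScalarFactor μ
  have hcov := ZLattice.covolume_eq_measure_fundamentalDomain L μ (ZLattice.isAddFundamentalDomain b μ)
  have hD : Measure.map T volume (ZSpan.fundamentalDomain B) = 1 := by
    rw [Measure.map_apply T.continuous.measurable (ZSpan.fundamentalDomain_measurableSet B)]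
    have : T ⁻¹' (ZSpan.fundamentalDomain B) = Set.pi Set.univ (fun _ => Set.Ico (0:ℝ) 1) := by
      ext t
      simp only [Set.mem_preimage, ZSpan.mem_fundamentalDomain, Set.mem_pi, Set.mem_univ, true_imp_iff]
      refine forall_congr' fun i => ?_
      have : B.repr (T t) i = t i := by
        have h2 : B.equivFunL (T t) = t := B.equivFunL.apply_symm_apply t
        exact congrFun h2 i
      rw [this]
    rw [this, volume_pi_pi]
    simp
  rw [h1, Measure.smul_apply] at hD
  have hfin : μ (ZSpan.fundamentalDomain B) ≠ ⊤ :=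
    (Bornology.IsBounded.measure_lt_top (ZSpan.fundamentalDomain_isBounded _)).ne
  have hc : (c : ENNReal) = ENNReal.ofReal (ZLattice.covolume L μ)⁻¹ := by
    rw [hcov, Measure.real]
    have h3 : (c : ENNReal) * μ (ZSpan.fundamentalDomain B) = 1 := hD
    have h4 := congrArg ENNReal.toReal h3
    rw [ENNReal.toReal_mul, ENNReal.toReal_one] at h4
    rw [← eq_inv_of_mul_eq_one_left h4, ENNReal.ofReal_toReal (by simp)]
  rw [h1, ← hc]
  rfl

lemma integral_comp_T {V : Type*} [NormedAddCommGroup V] [NormedSpace ℝ V] [FiniteDimensional ℝ V]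
    [MeasurableSpace V] [BorelSpace V] (μ : Measure V) [μ.IsAddHaarMeasure]
    (L : Submodule ℤ V) [DiscreteTopology L] [IsZLattice ℝ L] {ι : Type*} [Fintype ι]
    (b : Module.Basis ι ℤ L) (F : V → ℂ) :
    ∫ t, F ((b.ofZLatticeBasis ℝ L).equivFunL.symm t) = (ZLattice.covolume L μ)⁻¹ • ∫ v, F v ∂μ := by
  have h := integral_T μ L b
  have h2 := (b.ofZLatticeBasis ℝ L).equivFunL.symm.toHomeomorph.measurableEmbedding.integral_map
    (μ := volume) F
  rw [show ⇑(b.ofZLatticeBasis ℝ L).equivFunL.symm.toHomeomorph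
    = (b.ofZLatticeBasis ℝ L).equivFunL.symm from rfl] at h2
  rw [← h2, h, integral_smul_measure, ENNReal.toReal_ofReal]
  exact inv_nonneg.2 ENNReal.toReal_nonneg

lemma integrable_comp_T {V : Type*} [NormedAddCommGroup V] [NormedSpace ℝ V] [FiniteDimensional ℝ V]
    [MeasurableSpace V] [BorelSpace V] (μ : Measure V) [μ.IsAddHaarMeasure]
    (L : Submodule ℤ V) [DiscreteTopology L] [IsZLattice ℝ L] {ι : Type*} [Fintype ι]
    (b : Module.Basis ι ℤ L) (F : V → ℝ) (hF : Integrable F μ) :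
    Integrable (fun t => F ((b.ofZLatticeBasis ℝ L).equivFunL.symm t)) := by
  have h := integral_T μ L b
  have h2 := (b.ofZLatticeBasis ℝ L).equivFunL.symm.toHomeomorph.measurableEmbedding.integrable_map_iff
    (μ := volume) (g := F)
  rw [show ⇑(b.ofZLatticeBasis ℝ L).equivFunL.symm.toHomeomorph
    = (b.ofZLatticeBasis ℝ L).equivFunL.symm from rfl] at h2
  refine h2.1 ?_
  rw [h]
  exact hF.smul_measure (by simp)

/-- Decay weight. -/
noncomputable def wt (n : ℕ) (x : EuclideanSpace ℝ (Fin n)) : ℝ := (1 + ‖x‖) ^ (-((n : ℝ) + 1))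

lemma wt_pos (n : ℕ) (x) : 0 < wt n x := by unfold wt; positivity

lemma wt_integrable (n : ℕ) : Integrable (wt n) := by
  apply integrable_one_add_norm
  simp

lemma wt_continuous (n : ℕ) : Continuous (wt n) := by
  unfold wt
  refine Continuous.rpow_const (by fun_prop) fun x => Or.inl (by positivity)

lemma wt_add (n : ℕ) (x v : EuclideanSpace ℝ (Fin n)) :
    wt n (x + v) ≤ (1 + ‖v‖) ^ ((n : ℝ) + 1) * wt n x := by
  unfold wt
  rw [Real.rpow_neg (by positivity), Real.rpow_neg (by positivity), ← div_eq_mul_inv,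
    le_div_iff₀ (by positivity), inv_mul_le_iff₀ (by positivity), ← Real.mul_rpow (by positivity) (by positivity)]
  refine Real.rpow_le_rpow (by positivity) ?_ (by positivity)
  have : ‖x‖ ≤ ‖x + v‖ + ‖v‖ := by
    simpa using norm_sub_le (x + v) v
  nlinarith [norm_nonneg v, norm_nonneg (x + v)]

variable {d m : ℕ}

local notation "E" n => EuclideanSpace ℝ (Fin n)

instance instHaarProd : (volume : Measure ((E d) × (E m))).IsAddHaarMeasure :=
  Measure.prod.instIsAddHaarMeasure (volume : Measure (E d)) (volume : Measure (E m))

lemma reg_wt (L : Submodule ℤ ((E d) × (E m))) [DiscreteTopology L] [IsZLattice ℝ L] {ι : Type*}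
    [Fintype ι] (b : Module.Basis ι ℤ L) (K : ℝ) (hK : 0 ≤ K) :
    Reg (fun t : ι → ℝ => K * (wt d ((b.ofZLatticeBasis ℝ L).equivFunL.symm t).1 *
      wt m ((b.ofZLatticeBasis ℝ L).equivFunL.symm t).2)) := by
  set T := (b.ofZLatticeBasis ℝ L).equivFunL.symm
  constructor
  · refine Integrable.const_mul ?_ K
    exact integrable_comp_T volume L b (fun p : (E d) × (E m) => wt d p.1 * wt m p.2)
      ((wt_integrable d).mul_prod (wt_integrable m))
  · intro R
    have hbd : ∀ v : ι → ℝ, ‖v‖ ≤ R → ‖T v‖ ≤ ‖T.toContinuousLinearMap‖ * |R| := fun v hv =>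
      (T.toContinuousLinearMap.le_opNorm v).trans (mul_le_mul_of_nonneg_left (hv.trans (le_abs_self R)) (norm_nonneg _))
    set M := ‖T.toContinuousLinearMap‖ * |R|
    have hM : 0 ≤ M := by positivity
    refine ⟨(1 + M) ^ ((d : ℝ) + 1) * (1 + M) ^ ((m : ℝ) + 1), by positivity, fun t v hv => ?_⟩
    have h1 : ‖(T v).1‖ ≤ M := (norm_fst_le _).trans (hbd v hv)
    have h2 : ‖(T v).2‖ ≤ M := (norm_snd_le _).trans (hbd v hv)
    have e1 : wt d (T (t + v)).1 ≤ (1 + M) ^ ((d : ℝ) + 1) * wt d (T t).1 := by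
      rw [map_add, Prod.fst_add]
      refine (wt_add _ _ _).trans ?_
      have := (wt_pos d (T t).1).le
      gcongr
    have e2 : wt m (T (t + v)).2 ≤ (1 + M) ^ ((m : ℝ) + 1) * wt m (T t).2 := by
      rw [map_add, Prod.snd_add]
      refine (wt_add _ _ _).trans ?_
      have := (wt_pos m (T t).2).le
      gcongr
    have := mul_le_mul e1 e2 (wt_pos _ _).le (by have := (wt_pos d (T t).1).le; positivity)
    calc _ ≤ K * _ := mul_le_mul_of_nonneg_left this hK
      _ = _ := by ring

/-- Fourier transform. -/
noncomputable def ft {n : ℕ} (A : (E n) → ℂ) (k : E n) : ℂ :=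
  ∫ x, Complex.exp (-(2 * Real.pi * Complex.I * ((⟪x, k⟫ : ℝ) : ℂ))) * A x

/-- Pairing with the basis. -/
noncomputable def pairL {ι : Type*} (B : Module.Basis ι ℝ ((E d) × (E m))) :
    ((E d) × (E m)) →ₗ[ℝ] (ι → ℝ) where
  toFun q i := ⟪q.1, (B i).1⟫ + ⟪q.2, (B i).2⟫
  map_add' q r := by ext i; simp [inner_add_left]; ring
  map_smul' c q := by ext i; simp [inner_smul_left]; ring

lemma pairL_T {ι : Type*} [Fintype ι] (B : Module.Basis ι ℝ ((E d) × (E m))) (q : (E d) × (E m)) (t : ι → ℝ) :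
    ⟪q.1, (B.equivFunL.symm t).1⟫ + ⟪q.2, (B.equivFunL.symm t).2⟫ = ∑ i, pairL B q i * t i := by
  have : B.equivFunL.symm t = ∑ i, t i • B i := B.equivFun_symm_apply t
  rw [this]
  simp only [Prod.fst_sum, Prod.snd_sum, inner_sum, Prod.smul_fst, Prod.smul_snd, inner_smul_right,
    ← Finset.sum_add_distrib, pairL, LinearMap.coe_mk, AddHom.coe_mk]
  exact Finset.sum_congr rfl fun i _ => by ring

lemma pairL_bij {ι : Type*} [Fintype ι] (B : Module.Basis ι ℝ ((E d) × (E m))) :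
    Function.Bijective (pairL B) := by
  have hinj : Function.Injective (pairL B) := by
    rw [← LinearMap.ker_eq_bot, LinearMap.ker_eq_bot']
    intro q hq
    have := pairL_T B q (B.equivFunL q)
    rw [hq, B.equivFunL.symm_apply_apply] at this
    simp only [Pi.zero_apply, zero_mul, Finset.sum_const_zero] at this
    have h1 := real_inner_self_nonneg (x := q.1)
    have h2 := real_inner_self_nonneg (x := q.2)
    refine Prod.ext ?_ ?_
    · exact inner_self_eq_zero (𝕜 := ℝ).1 (by linarith)
    · exact inner_self_eq_zero (𝕜 := ℝ).1 (by linarith)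
  refine ⟨hinj, ?_⟩
  refine (LinearMap.injective_iff_surjective_of_finrank_eq_finrank ?_).1 hinj
  rw [Module.finrank_eq_card_basis B, Module.finrank_fintype_fun_eq_card]

lemma T_zc (L : Submodule ℤ ((E d) × (E m))) [DiscreteTopology L] [IsZLattice ℝ L] {ι : Type*}
    [Fintype ι] (b : Module.Basis ι ℤ L) (n : ι → ℤ) :
    (b.ofZLatticeBasis ℝ L).equivFunL.symm (zc n) = (b.equivFun.symm n : (E d) × (E m)) := by
  have : (b.ofZLatticeBasis ℝ L).equivFunL.symm (zc n)
    = ∑ i, zc n i • (b.ofZLatticeBasis ℝ L) i := (b.ofZLatticeBasis ℝ L).equivFun_symm_apply _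
  rw [this, b.equivFun_symm_apply]
  simp only [zc, Module.Basis.ofZLatticeBasis_apply, Submodule.coe_sum, Submodule.coe_smul]
  exact Finset.sum_congr rfl fun i _ => Int.cast_smul_eq_zsmul ℝ _ _

/-- parametrization of the dual lattice -/
lemma exists_dual_equiv (L : Submodule ℤ ((E d) × (E m))) [DiscreteTopology L] [IsZLattice ℝ L] {ι : Type*}
    [Fintype ι] (b : Module.Basis ι ℤ L) :
    ∃ e : (ι → ℤ) ≃ dualL d m L, ∀ n, pairL (b.ofZLatticeBasis ℝ L) (e n : (E d) × (E m)) = zc n := by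
  set B := b.ofZLatticeBasis ℝ L with hB
  have hbij := pairL_bij B
  choose g hg using hbij.2
  have hmem : ∀ n : ι → ℤ, g (zc n) ∈ dualL d m L := by
    intro n x hx
    have hx' := T_zc L b (b.equivFun ⟨x, hx⟩)
    rw [LinearEquiv.symm_apply_apply] at hx'
    have := pairL_T B (g (zc n)) (zc (b.equivFun ⟨x, hx⟩))
    rw [hx', hg] at this
    refine ⟨∑ i, n i * b.equivFun ⟨x, hx⟩ i, this.trans ?_⟩
    push_cast
    rfl
  refine ⟨Equiv.ofBijective (fun n => ⟨g (zc n), hmem n⟩) ⟨?_, ?_⟩, fun n => hg _⟩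
  · intro n k hnk
    have h1 : g (zc n) = g (zc k) := congrArg Subtype.val hnk
    have h2 := congrArg (pairL B) h1
    rw [hg, hg] at h2
    ext i
    have := congrFun h2 i
    simpa [zc] using this
  · rintro ⟨q, hq⟩
    have : ∀ i, ∃ n : ℤ, pairL B q i = n := by
      intro i
      obtain ⟨n, hn⟩ := hq (b i) (b i).2
      refine ⟨n, ?_⟩
      rw [← hn]
      simp [pairL, hB]
    choose n hn using this
    refine ⟨n, Subtype.ext ?_⟩
    apply hbij.1
    change pairL B (g (zc n)) = _
    rw [hg]
    ext i
    simp [zc, hn]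

lemma ft_prod (L : Submodule ℤ ((E d) × (E m))) [DiscreteTopology L] [IsZLattice ℝ L] {ι : Type*}
    [Fintype ι] (b : Module.Basis ι ℤ L) (A : (E d) → ℂ) (B : (E m) → ℂ) (n : ι → ℤ)
    (q : (E d) × (E m)) (hq : pairL (b.ofZLatticeBasis ℝ L) q = zc n) :
    ∫ t, ch n t * (A ((b.ofZLatticeBasis ℝ L).equivFunL.symm t).1 *
      B ((b.ofZLatticeBasis ℝ L).equivFunL.symm t).2)
      = (ZLattice.covolume L volume)⁻¹ • (ft A q.1 * ft B q.2) := by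
  have h1 : ∀ t, ch n t = Complex.exp (-(2 * Real.pi * Complex.I *
      ((⟪((b.ofZLatticeBasis ℝ L).equivFunL.symm t).1, q.1⟫ +
        ⟪((b.ofZLatticeBasis ℝ L).equivFunL.symm t).2, q.2⟫ : ℝ) : ℂ))) := by
    intro t
    rw [real_inner_comm, real_inner_comm q.2, pairL_T, hq]
    rfl
  simp_rw [h1]
  rw [integral_comp_T volume L b (fun p : (E d) × (E m) => Complex.exp (-(2 * Real.pi * Complex.I *
      ((⟪p.1, q.1⟫ + ⟪p.2, q.2⟫ : ℝ) : ℂ))) * (A p.1 * B p.2))]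
  congr 1
  rw [ft, ft, Measure.volume_eq_prod, ← integral_prod_mul]
  refine integral_congr_ae (Filter.Eventually.of_forall fun p => ?_)
  simp only
  push_cast
  rw [mul_add, neg_add, Complex.exp_add]
  ring

theorem lattice_poisson (L : Submodule ℤ ((E d) × (E m))) [DiscreteTopology L] [IsZLattice ℝ L]
    (hinj1 : Set.InjOn Prod.fst (L : Set ((E d) × (E m))))
    (star : (E d) → (E m)) (hstar : ∀ p ∈ L, star (Prod.fst p) = Prod.snd p)
    (starD : (E d) → (E m)) (hinjD : Set.InjOn Prod.fst (dualL d m L))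
    (hstarD : ∀ p ∈ dualL d m L, starD (Prod.fst p) = Prod.snd p)
    (A : (E d) → ℂ) (B : (E m) → ℂ) (hA : Continuous A) (hB : Continuous B)
    (CA CB : ℝ) (hCA : ∀ x, ‖A x‖ ≤ CA * wt d x) (hCB : ∀ x, ‖B x‖ ≤ CB * wt m x) :
    (Summable fun k : Prod.fst '' dualL d m L => ‖ft A (k : E d) * ft B (starD k)‖ ^ 2) ∧
    ((Summable fun k : Prod.fst '' dualL d m L => ft A (k : E d) * ft B (starD k)) →
      ∑' z : physL d m L, A z * B (star z) =
        (ZLattice.covolume L volume)⁻¹ • ∑' k : Prod.fst '' dualL d m L, ft A (k : E d) * ft B (starD k)) := by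
  have : Module.Finite ℤ L := ZLattice.module_finite ℝ L
  have : Module.Free ℤ L := ZLattice.module_free ℝ L
  let b := Module.Free.chooseBasis ℤ L
  have hCA0 : 0 ≤ CA := by
    have := (norm_nonneg _).trans (hCA 0)
    exact nonneg_of_mul_nonneg_left this (wt_pos d 0)
  have hCB0 : 0 ≤ CB := by
    have := (norm_nonneg _).trans (hCB 0)
    exact nonneg_of_mul_nonneg_left this (wt_pos m 0)
  have hreg := reg_wt L b (CA * CB) (mul_nonneg hCA0 hCB0)
  set T := (b.ofZLatticeBasis ℝ L).equivFunL.symm with hT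
  set G : (_ → ℝ) → ℂ := fun t => A (T t).1 * B (T t).2 with hG
  have hGc : Continuous G := by
    have := T.continuous
    fun_prop
  have hGH : ∀ t, ‖G t‖ ≤ CA * CB * (wt d (T t).1 * wt m (T t).2) := by
    intro t
    rw [norm_mul]
    calc _ ≤ (CA * wt d (T t).1) * (CB * wt m (T t).2) :=
          mul_le_mul (hCA _) (hCB _) (norm_nonneg _) (mul_nonneg hCA0 (wt_pos _ _).le)
      _ = _ := by ring
  obtain ⟨e, he⟩ := exists_dual_equiv L b
  let e2 := e.trans (Equiv.Set.imageOfInjOn Prod.fst _ hinjD)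
  have he2 : ∀ n, ∫ t, ch n t * G t = (ZLattice.covolume L volume)⁻¹ •
      (ft A (e2 n : E d) * ft B (starD (e2 n))) := by
    intro n
    have h1 : ((e2 n : _) : E d) = (e n : (E d) × (E m)).1 := rfl
    rw [h1, hstarD _ (e n).2]
    exact ft_prod L b A B n _ (he n)
  have hcov : (ZLattice.covolume L volume)⁻¹ ≠ 0 := inv_ne_zero (ZLattice.covolume_ne_zero L volume)
  constructor
  · have h := parseval hreg hGH hGc
    simp_rw [he2, norm_smul, mul_pow] at h
    rw [summable_mul_left_iff (by simpa using hcov)] at h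
    rw [← e2.summable_iff]
    exact h
  · intro hs
    rw [← e2.summable_iff] at hs
    have h := poisson hreg hGH hGc (by simp_rw [he2]; exact hs.const_smul _)
    simp_rw [he2] at h
    rw [tsum_const_smul'' , e2.tsum_eq (fun k => ft A (k : E d) * ft B (starD k))] at h
    rw [← h]
    let e1 := b.equivFun.symm.toEquiv.trans (Equiv.Set.imageOfInjOn Prod.fst _ hinj1)
    refine (e1.tsum_eq (fun z : physL d m L => A z * B (star z))).symm.trans ?_
    refine tsum_congr fun n => ?_
    have h1 : ((e1 n : physL d m L) : E d) = (b.equivFun.symm n : (E d) × (E m)).1 := rfl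
    rw [h1, hstar _ (b.equivFun.symm n).2, hG, ← T_zc L b n]
end lattice

section analysis

local notation "E" n => EuclideanSpace ℝ (Fin n)

/-- unimodular exponential -/
noncomputable def ex {n : ℕ} (x k : E n) : ℂ :=
  Complex.exp (2 * Real.pi * Complex.I * ((⟪x, k⟫ : ℝ) : ℂ))

lemma norm_ex {n : ℕ} (x k : E n) : ‖ex x k‖ = 1 := by
  unfold ex
  rw [Complex.norm_exp]
  simp

lemma ex_add {n : ℕ} (x y k : E n) : ex (x + y) k = ex x k * ex y k := by
  unfold ex
  rw [← Complex.exp_add, inner_add_left]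
  push_cast
  ring_nf

lemma ex_comm {n : ℕ} (x k : E n) : ex x k = ex k x := by
  unfold ex
  rw [real_inner_comm]

lemma ex_neg {n : ℕ} (x k : E n) : ex (-x) k = Complex.exp (-(2 * Real.pi * Complex.I * ((⟪x, k⟫ : ℝ) : ℂ))) := by
  unfold ex
  rw [inner_neg_left]
  push_cast
  ring_nf

lemma conj_ex {n : ℕ} (x k : E n) : (starRingEnd ℂ) (ex x k) = ex (-x) k := by
  unfold ex
  rw [← Complex.exp_conj, inner_neg_left]
  have h2 : (starRingEnd ℂ) 2 = 2 := Complex.conj_ofNat 2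
  simp [h2]

lemma ft_eq {n : ℕ} (A : (E n) → ℂ) (k : E n) : ft A k = ∫ x, ex (-x) k * A x := by
  simp only [ft, ex_neg]

lemma ex_continuous {n : ℕ} : Continuous fun p : (E n) × (E n) => ex p.1 p.2 := by
  unfold ex
  fun_prop

@[fun_prop]
lemma ex_cont {n : ℕ} {X : Type*} [TopologicalSpace X] {a b : X → E n} (ha : Continuous a)
    (hb : Continuous b) : Continuous fun x => ex (a x) (b x) :=
  ex_continuous.comp (ha.prodMk hb)

lemma ft_schwartz {n : ℕ} (φ : SchwartzMap (E n) ℂ) (k : E n) :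
    ft φ k = (FourierTransform.fourier φ : SchwartzMap (E n) ℂ) k := by
  rw [SchwartzMap.fourier_coe, Real.fourier_eq']
  unfold ft
  refine integral_congr_ae (Filter.Eventually.of_forall fun x => ?_)
  simp only [smul_eq_mul]
  congr 2
  push_cast
  ring

lemma schwartz_bound {n : ℕ} (φ : SchwartzMap (E n) ℂ) (k : ℕ) :
    ∃ C : ℝ, 0 ≤ C ∧ ∀ x, ‖φ x‖ ≤ C * ((1 + ‖x‖) ^ k)⁻¹ := by
  have h := SchwartzMap.one_add_le_sup_seminorm_apply (𝕜 := ℝ) (m := (k, 0)) (k := k) (n := 0)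
    le_rfl le_rfl φ
  generalize 2 ^ (k, 0).1 * ((Finset.Iic (k, 0)).sup fun m => SchwartzMap.seminorm ℝ m.1 m.2) φ = C at h
  refine ⟨C, le_trans (by positivity) (h 0), fun x => ?_⟩
  · rw [← div_eq_mul_inv, le_div_iff₀ (by positivity), mul_comm]
    have := h x
    rw [norm_iteratedFDeriv_zero] at this
    exact this

lemma wt_eq (n : ℕ) (x : E n) : wt n x = ((1 + ‖x‖) ^ (n + 1))⁻¹ := by
  unfold wt
  rw [Real.rpow_neg (by positivity)]
  congr 1
  exact_mod_cast Real.rpow_natCast (1 + ‖x‖) (n + 1)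

lemma wt_mul_le (n : ℕ) (k b : E n) : wt n b * wt n k ≤ wt n (k - b) := by
  have h := wt_add n (k - b) b
  rw [sub_add_cancel] at h
  have hb : wt n b = ((1 + ‖b‖) ^ ((n : ℝ) + 1))⁻¹ := by
    unfold wt
    rw [Real.rpow_neg (by positivity)]
  rw [hb, inv_mul_le_iff₀ (by positivity)]
  exact h

/-- A function with fast decay whose Fourier transform dominates the weight. -/
lemma exists_majorant (d : ℕ) : ∃ (ψ : (E d) → ℂ) (C c : ℝ), Continuous ψ ∧ 0 < c ∧
    (∀ x, ‖ψ x‖ ≤ C * wt d x) ∧ ∀ k, c * wt d k ≤ ‖ft ψ k‖ := by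
  let β : ContDiffBump (0 : E d) := ⟨1, 2, by norm_num, by norm_num⟩
  have hβs : HasCompactSupport (fun x => ((β x : ℝ) : ℂ)) := 
    HasCompactSupport.comp_left (g := Complex.ofReal) β.hasCompactSupport Complex.ofReal_zero
  have hβc : ContDiff ℝ (⊤ : ℕ∞) (fun x => ((β x : ℝ) : ℂ)) :=
    Complex.ofRealCLM.contDiff.comp β.contDiff
  let βS : SchwartzMap (E d) ℂ := hβs.toSchwartzMap hβc
  have hβS : ∀ x, βS x = ((β x : ℝ) : ℂ) := fun x => rfl
  let G : SchwartzMap (E d) ℂ := FourierTransformInv.fourierInv βS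
  have hG : ∀ k, ft G k = βS k := by
    intro k
    rw [ft_schwartz, FourierTransform.fourier_fourierInv_eq]
  have hGi : Integrable G := G.integrable
  have hwi : Integrable (fun a => (wt d a : ℂ)) := (wt_integrable d).ofReal
  have hwc : Continuous (fun a => (wt d a : ℂ)) := Complex.continuous_ofReal.comp (wt_continuous d)
  have hGc : Continuous G := G.continuous
  obtain ⟨CG, hCG0, hCG⟩ := schwartz_bound G (d + 1)
  let W : (E d) → ℂ := fun x => ∫ a, ex x a * (wt d a : ℂ)
  have hWc : Continuous W := by
    refine continuous_of_dominated (bound := wt d) (fun x => ?_) (fun x => ?_) (wt_integrable d) ?_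
    · exact Continuous.aestronglyMeasurable (by fun_prop)
    · filter_upwards with a
      rw [norm_mul, norm_ex, one_mul, Complex.norm_real, Real.norm_of_nonneg (wt_pos d a).le]
    · filter_upwards with a
      fun_prop
  have hWb : ∀ x, ‖W x‖ ≤ ∫ a, wt d a := by
    intro x
    refine norm_integral_le_of_norm_le (wt_integrable d) ?_
    filter_upwards with a
    rw [norm_mul, norm_ex, one_mul, Complex.norm_real, Real.norm_of_nonneg (wt_pos d a).le]
  let ψ : (E d) → ℂ := fun x => G x * W x
  have hft : ∀ k, ft ψ k = ((∫ b, wt d (k - b) * β b : ℝ) : ℂ) := by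
    intro k
    calc ft ψ k = ∫ x, ∫ a, ex (-x) (k - a) * G x * (wt d a : ℂ) := by
          rw [ft_eq]
          refine integral_congr_ae (Filter.Eventually.of_forall fun x => ?_)
          simp only [ψ, W]
          rw [← mul_assoc, ← integral_const_mul]
          refine integral_congr_ae (Filter.Eventually.of_forall fun a => ?_)
          have : ex (-x) (k - a) = ex (-x) k * ex x a := by
            rw [ex_comm, sub_eq_add_neg, ex_add, ex_comm k, ex_comm (-a)]
            simp [ex]
          simp only [this]
          ring
      _ = ∫ a, ∫ x, ex (-x) (k - a) * G x * (wt d a : ℂ) := by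
          have hwc' := wt_continuous d
          refine integral_integral_swap ?_
          refine (hGi.mul_prod hwi).norm.mono' ?_ ?_
          · exact Continuous.aestronglyMeasurable (by unfold Function.uncurry; fun_prop)
          · filter_upwards with p
            simp only [Function.uncurry, norm_mul, norm_ex, one_mul, le_refl]
      _ = ∫ a, βS (k - a) * (wt d a : ℂ) := by
          refine integral_congr_ae (Filter.Eventually.of_forall fun a => ?_)
          simp only
          rw [integral_mul_const, ← ft_eq, hG]
      _ = ∫ b, βS b * (wt d (k - b) : ℂ) := by
          rw [← integral_sub_left_eq_self _ volume k]
          simp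
      _ = _ := by
          rw [← integral_complex_ofReal]
          refine integral_congr_ae (Filter.Eventually.of_forall fun a => ?_)
          simp only [hβS]
          push_cast
          ring
  have hβn : ∀ b, 0 ≤ β b := fun b => β.nonneg
  have hcs : HasCompactSupport (fun b => wt d b * β b) := β.hasCompactSupport.mul_left
  have hpos : 0 < ∫ b, wt d b * β b := by
    refine Continuous.integral_pos_of_hasCompactSupport_nonneg_nonzero (x := 0)
      ((wt_continuous d).mul β.continuous) hcs
      (fun b => mul_nonneg (wt_pos d b).le (hβn b)) ?_
    have h1 : β 0 = 1 := β.one_of_mem_closedBall (by simp [β])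
    rw [h1, mul_one]
    exact (wt_pos d 0).ne'
  refine ⟨ψ, CG * ∫ a, wt d a, ∫ b, wt d b * β b, hGc.mul hWc, hpos, fun x => ?_, fun k => ?_⟩
  · rw [norm_mul, wt_eq]
    calc _ ≤ _ := mul_le_mul (hCG x) (hWb x) (norm_nonneg _) (by positivity)
      _ = _ := by ring
  · rw [hft, Complex.norm_real, Real.norm_eq_abs]
    refine le_trans ?_ (le_abs_self _)
    rw [← integral_mul_const]
    refine integral_mono ?_ ?_ fun b => ?_
    · exact (((wt_continuous d).mul β.continuous).integrable_of_hasCompactSupport hcs).mul_const _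
    · exact Continuous.integrable_of_hasCompactSupport
        (((wt_continuous d).comp (by fun_prop)).mul β.continuous) β.hasCompactSupport.mul_left
    · have := mul_le_mul_of_nonneg_right (wt_mul_le d k b) (hβn b)
      simp only
      linarith

variable {m : ℕ} {f : (E m) → ℂ}

lemma f_bound (hf : Continuous f)
    (C α : ℝ) (hC : 0 < C) (hα : 0 < α)
    (hdecay : ∀ x : E m, ‖x‖ ^ ((m : ℝ) + 1 + α) * ‖f x‖ ≤ C) :
    ∃ K : ℝ, 0 ≤ K ∧ ∀ x, ‖f x‖ ≤ K * wt m x := by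
  obtain ⟨M, hM⟩ := (isCompact_closedBall (0 : E m) 1).exists_bound_of_continuousOn hf.continuousOn
  have hM0 : 0 ≤ M := (norm_nonneg _).trans (hM 0 (by simp))
  refine ⟨(M + C) * 2 ^ (m + 1), by positivity, fun x => ?_⟩
  rw [wt_eq, ← div_eq_mul_inv, le_div_iff₀ (by positivity)]
  rcases le_total ‖x‖ 1 with hx | hx
  · have h1 := hM x (by simpa using hx)
    have h2 : (1 + ‖x‖) ^ (m + 1) ≤ 2 ^ (m + 1) := by gcongr; linarith
    exact mul_le_mul (by linarith) h2 (by positivity) (by positivity)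
  · have h1 : (1 + ‖x‖) ^ (m + 1) ≤ 2 ^ (m + 1) * ‖x‖ ^ (m + 1) := by
      rw [← mul_pow]; gcongr; linarith
    have h2 : ‖x‖ ^ (m + 1) ≤ ‖x‖ ^ ((m : ℝ) + 1 + α) := by
      rw [← Real.rpow_natCast]
      apply Real.rpow_le_rpow_of_exponent_le hx
      push_cast
      linarith
    calc ‖f x‖ * (1 + ‖x‖) ^ (m + 1) ≤ ‖f x‖ * (2 ^ (m + 1) * ‖x‖ ^ ((m : ℝ) + 1 + α)) := by
          gcongr
          exact h1.trans (by gcongr)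
      _ = (‖x‖ ^ ((m : ℝ) + 1 + α) * ‖f x‖) * 2 ^ (m + 1) := by ring
      _ ≤ _ := by
          gcongr
          exact (hdecay x).trans (by linarith)

/-- autocorrelation -/
noncomputable def acf (f : (E m) → ℂ) (y : E m) : ℂ := ∫ u, f u * (starRingEnd ℂ) (f (u + y))

/-- window transform -/
noncomputable def J (f : (E m) → ℂ) (k : E m) : ℂ := ∫ u, ex k u * f u

lemma f_int (hf : Continuous f) {K : ℝ} (hK : ∀ x, ‖f x‖ ≤ K * wt m x) : Integrable f :=
  ((wt_integrable m).const_mul K).mono' hf.aestronglyMeasurable (Filter.Eventually.of_forall hK)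

lemma wt_le_one (x : E m) : wt m x ≤ 1 := by
  rw [wt_eq]
  exact inv_le_one_of_one_le₀ (one_le_pow₀ (by linarith [norm_nonneg x]))

lemma f_bdd {K : ℝ} (hK0 : 0 ≤ K) (hK : ∀ x, ‖f x‖ ≤ K * wt m x) (x) : ‖f x‖ ≤ K :=
  (hK x).trans (by nlinarith [wt_le_one x])

lemma acf_continuous (hf : Continuous f) {K : ℝ} (hK0 : 0 ≤ K) (hK : ∀ x, ‖f x‖ ≤ K * wt m x) :
    Continuous (acf f) := by
  have hfi := f_int hf hK
  refine continuous_of_dominated (bound := fun u => ‖f u‖ * K) (fun x => ?_) (fun x => ?_)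
    (hfi.norm.mul_const K) ?_
  · exact Continuous.aestronglyMeasurable (by fun_prop)
  · filter_upwards with a
    rw [norm_mul, RCLike.norm_conj]
    exact mul_le_mul_of_nonneg_left (f_bdd hK0 hK _) (norm_nonneg _)
  · filter_upwards with a
    fun_prop

lemma wt_mul_wt (u y : E m) : wt m u * wt m (u + y) ≤ 2 ^ (m + 1) * wt m y * (wt m u + wt m (u + y)) := by
  have key : ∀ u v : E m, ‖y‖ ≤ ‖u‖ + ‖v‖ → ‖u‖ ≤ ‖v‖ → wt m v ≤ 2 ^ (m + 1) * wt m y := by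
    intro u v h1 h2
    rw [wt_eq, wt_eq, ← div_eq_mul_inv, le_div_iff₀ (by positivity), inv_mul_le_iff₀ (by positivity), ← mul_pow]
    gcongr
    nlinarith
  have hy : ‖y‖ ≤ ‖u‖ + ‖u + y‖ := by
    have := norm_sub_le (u + y) u
    simp only [add_sub_cancel_left] at this
    linarith
  have p1 := wt_pos m u
  have p2 := wt_pos m (u + y)
  have p3 := wt_pos m y
  rcases le_total ‖u‖ ‖u + y‖ with h | h
  · have := key u (u + y) hy h
    calc _ ≤ wt m u * (2 ^ (m + 1) * wt m y) := by gcongr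
      _ ≤ _ := by
        have : 0 ≤ 2 ^ (m + 1) * wt m y * wt m (u + y) := by positivity
        linarith
  · have := key (u + y) u (by linarith) h
    calc _ ≤ (2 ^ (m + 1) * wt m y) * wt m (u + y) := by gcongr
      _ ≤ _ := by
        have : 0 ≤ 2 ^ (m + 1) * wt m y * wt m u := by positivity
        linarith

lemma acf_bound {K : ℝ} (hK0 : 0 ≤ K) (hK : ∀ x, ‖f x‖ ≤ K * wt m x) :
    ∃ C, ∀ y, ‖acf f y‖ ≤ C * wt m y := by
  refine ⟨K * K * 2 ^ (m + 1) * (2 * ∫ u, wt m u), fun y => ?_⟩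
  have hi : Integrable (fun u => wt m (u + y)) := (wt_integrable m).comp_add_right y
  have : ‖acf f y‖ ≤ ∫ u, K * K * (2 ^ (m + 1) * wt m y) * (wt m u + wt m (u + y)) := by
    refine norm_integral_le_of_norm_le (((wt_integrable m).add hi).const_mul _) ?_
    filter_upwards with u
    rw [norm_mul, RCLike.norm_conj]
    calc _ ≤ (K * wt m u) * (K * wt m (u + y)) :=
          mul_le_mul (hK _) (hK _) (norm_nonneg _) (mul_nonneg hK0 (wt_pos _ _).le)
      _ = K * K * (wt m u * wt m (u + y)) := by ring
      _ ≤ K * K * (2 ^ (m + 1) * wt m y * (wt m u + wt m (u + y))) :=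
          mul_le_mul_of_nonneg_left (wt_mul_wt u y) (by positivity)
      _ = _ := by ring
  refine this.trans (le_of_eq ?_)
  rw [integral_const_mul, integral_add (wt_integrable m) hi, integral_add_right_eq_self (wt m) y]
  ring

lemma ft_acf (hf : Continuous f) {K : ℝ} (hK : ∀ x, ‖f x‖ ≤ K * wt m x) (k : E m) :
    ft (acf f) k = ((‖J f k‖ ^ 2 : ℝ) : ℂ) := by
  have hfi := f_int hf hK
  calc ft (acf f) k = ∫ y, ∫ u, f u * (ex (-y) k * (starRingEnd ℂ) (f (u + y))) := by
        rw [ft_eq]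
        refine integral_congr_ae (Filter.Eventually.of_forall fun y => ?_)
        simp only [acf]
        rw [← integral_const_mul]
        congr 1; ext u; ring
    _ = ∫ u, ∫ y, f u * (ex (-y) k * (starRingEnd ℂ) (f (u + y))) := by
        refine (integral_integral_swap ?_).symm
        have h1 := (measurePreserving_prod_add (volume : Measure (E m)) (volume : Measure (E m))).integrable_comp_of_integrable
          (hfi.mul_prod hfi)
        refine h1.norm.mono' ?_ ?_
        · exact Continuous.aestronglyMeasurable (by unfold Function.uncurry; fun_prop)
        · filter_upwards with p
          simp [Function.uncurry, norm_ex]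
    _ = ∫ u, (ex k u * f u) * (starRingEnd ℂ) (J f k) := by
        refine integral_congr_ae (Filter.Eventually.of_forall fun u => ?_)
        simp only
        rw [integral_const_mul, mul_comm (ex k u), mul_assoc]
        congr 1
        rw [← integral_add_left_eq_self _ (-u), J, ← integral_conj, ← integral_const_mul]
        refine integral_congr_ae (Filter.Eventually.of_forall fun y => ?_)
        simp only [add_neg_cancel_left, map_mul]
        rw [ex_comm k y, conj_ex, neg_add, neg_neg, ex_add, ex_comm k u, mul_assoc]
    _ = _ := by
        rw [integral_mul_const, ← J, Complex.mul_conj, Complex.normSq_eq_norm_sq]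

lemma ft_neg (k : E m) : ft (fun y => f (-y)) k = J f k := by
  rw [ft_eq, ← integral_neg_eq_self]
  simp only [neg_neg, J, ex_comm k]
end analysis

end GPS

/-- Generalized Poisson summation formula on a dense ℤ-module:
(∑_{z∈L} η(z) δ_z)^ = ∑_{k∈L*} |c(k)|² δ_k in the tempered-distribution sense, i.e.
tested against any Schwartz function φ (γ̂(φ) = γ(φ̂)). Here
η(z) = (1/|det L̃|) ∫ f(u) conj(f(u−z*)) du and |c(k)|² = (1/|det L̃|²)|f̂(−k*)|². -/
theorem generalized_poisson_summation (d m : ℕ)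
    (L : Submodule ℤ (EuclideanSpace ℝ (Fin d) × EuclideanSpace ℝ (Fin m)))
    [DiscreteTopology L] [IsZLattice ℝ L]
    (hinj1 : Set.InjOn Prod.fst (L : Set (EuclideanSpace ℝ (Fin d) × EuclideanSpace ℝ (Fin m))))
    (hdense1 : Dense (physL d m L))
    (hinj2 : Set.InjOn Prod.snd (L : Set (EuclideanSpace ℝ (Fin d) × EuclideanSpace ℝ (Fin m))))
    (hdense2 : Dense (Prod.snd '' (L : Set (EuclideanSpace ℝ (Fin d) × EuclideanSpace ℝ (Fin m)))))
    (star : EuclideanSpace ℝ (Fin d) → EuclideanSpace ℝ (Fin m))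
    (hstar : ∀ p ∈ L, star (Prod.fst p) = Prod.snd p)
    (starD : EuclideanSpace ℝ (Fin d) → EuclideanSpace ℝ (Fin m))
    (hinjD : Set.InjOn Prod.fst (dualL d m L))
    (hstarD : ∀ p ∈ dualL d m L, starD (Prod.fst p) = Prod.snd p)
    (f : EuclideanSpace ℝ (Fin m) → ℂ) (hf : Continuous f)
    (C α : ℝ) (hC : 0 < C) (hα : 0 < α)
    (hdecay : ∀ x : EuclideanSpace ℝ (Fin m), ‖x‖ ^ ((m : ℝ) + 1 + α) * ‖f x‖ ≤ C) :
    ∀ φ : SchwartzMap (EuclideanSpace ℝ (Fin d)) ℂ,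
      (∑' z : physL d m L, etaLim d m L star f (z : EuclideanSpace ℝ (Fin d)) *
          ∫ x, Complex.exp (-(2 * Real.pi * Complex.I *
            ((⟪x, (z : EuclideanSpace ℝ (Fin d))⟫ : ℝ) : ℂ))) * φ x)
        = ∑' k : Prod.fst '' dualL d m L,
            intensity d m L starD f (k : EuclideanSpace ℝ (Fin d)) •
              φ (k : EuclideanSpace ℝ (Fin d)) := by
  intro φ
  obtain ⟨K, hK0, hK⟩ := GPS.f_bound hf C α hC hα hdecay
  obtain ⟨CB, hCB⟩ := GPS.acf_bound hK0 hK
  have hJ : ∀ k, intensity d m L starD f k = ((ZLattice.covolume L volume)⁻¹) ^ 2 *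
      ‖GPS.J f (starD k)‖ ^ 2 := fun k => rfl
  -- summability on the dual side
  have hsum : Summable fun k : Prod.fst '' dualL d m L =>
      φ (k : EuclideanSpace ℝ (Fin d)) * GPS.ft (GPS.acf f) (starD k) := by
    obtain ⟨ψ, Cψ, c, hψc, hc, hψ, hψft⟩ := GPS.exists_majorant d
    have h1 := (GPS.lattice_poisson L hinj1 star hstar starD hinjD hstarD ψ (fun y => f (-y)) hψc
      (hf.comp continuous_neg) Cψ K hψ (fun y => by
        have := hK (-y)
        simpa [GPS.wt] using this)).1
    obtain ⟨Cφ, hCφ0, hCφ⟩ := GPS.schwartz_bound φ ((d + 1) * 2)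
    refine Summable.of_norm_bounded (h1.mul_left (Cφ / c ^ 2)) fun k => ?_
    rw [GPS.ft_neg, GPS.ft_acf hf hK, norm_mul, norm_mul, Complex.norm_real, norm_pow, norm_norm,
      mul_pow, ← mul_assoc]
    refine mul_le_mul_of_nonneg_right ?_ (by positivity)
    refine (hCφ k).trans ?_
    have h2 := hψft k
    have h3 : (c * GPS.wt d k) ^ 2 ≤ ‖GPS.ft ψ k‖ ^ 2 :=
      pow_le_pow_left₀ (mul_nonneg hc.le (GPS.wt_pos d k).le) h2 2
    rw [pow_mul, ← inv_pow, ← GPS.wt_eq, div_mul_eq_mul_div, le_div_iff₀ (by positivity)]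
    calc Cφ * GPS.wt d k ^ 2 * c ^ 2 = Cφ * (c * GPS.wt d k) ^ 2 := by ring
      _ ≤ _ := mul_le_mul_of_nonneg_left h3 hCφ0
  -- the direct side
  let A : SchwartzMap (EuclideanSpace ℝ (Fin d)) ℂ := FourierTransformInv.fourierInv φ
  have hA : ∀ k, GPS.ft A k = φ k := by
    intro k
    rw [GPS.ft_schwartz, FourierTransform.fourier_fourierInv_eq]
  have hA2 : ∀ x, A (-x) = GPS.ft φ x := by
    intro x
    rw [GPS.ft_schwartz]
    change (FourierTransformInv.fourierInv φ : SchwartzMap (EuclideanSpace ℝ (Fin d)) ℂ) (-x) = _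
    rw [SchwartzMap.fourierInv_coe, SchwartzMap.fourier_coe, Real.fourierInv_eq_fourier_neg, neg_neg]
  obtain ⟨CA, hCA0, hCA⟩ := GPS.schwartz_bound A (d + 1)
  have h2 := (GPS.lattice_poisson L hinj1 star hstar starD hinjD hstarD A (GPS.acf f) A.continuous
    (GPS.acf_continuous hf hK0 hK) CA CB (fun x => by rw [GPS.wt_eq]; exact hCA x) hCB).2
    (by simpa only [hA] using hsum)
  -- negation on the module
  have hneg : ∀ z, z ∈ physL d m L → -z ∈ physL d m L ∧ star (-z) = -star z := by
    rintro _ ⟨p, hp, rfl⟩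
    have hp' : -p ∈ L := L.neg_mem hp
    refine ⟨⟨-p, hp', rfl⟩, ?_⟩
    rw [hstar p hp]
    exact hstar (-p) hp'
  let e : physL d m L ≃ physL d m L :=
    { toFun := fun z => ⟨-z, (hneg z z.2).1⟩
      invFun := fun z => ⟨-z, (hneg z z.2).1⟩
      left_inv := fun z => Subtype.ext (neg_neg _)
      right_inv := fun z => Subtype.ext (neg_neg _) }
  rw [← e.tsum_eq] at h2
  have h3 : ∀ z : physL d m L, A (e z : EuclideanSpace ℝ (Fin d)) * GPS.acf f (star (e z)) =
      GPS.ft φ z * ∫ u, f u * (starRingEnd ℂ) (f (u - star z)) := by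
    intro z
    have h4 : ((e z : physL d m L) : EuclideanSpace ℝ (Fin d)) = -z := rfl
    rw [h4, hA2, (hneg z z.2).2]
    simp only [GPS.acf, sub_eq_add_neg]
  simp_rw [h3, hA] at h2
  have h5 : ∀ z : physL d m L, etaLim d m L star f (z : EuclideanSpace ℝ (Fin d)) *
          (∫ x, Complex.exp (-(2 * Real.pi * Complex.I *
            ((⟪x, (z : EuclideanSpace ℝ (Fin d))⟫ : ℝ) : ℂ))) * φ x)
      = (ZLattice.covolume L volume)⁻¹ •
        (GPS.ft φ z * ∫ u, f u * (starRingEnd ℂ) (f (u - star z))) := by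
    intro z
    rw [etaLim, smul_mul_assoc, mul_comm]
    rfl
  simp_rw [h5]
  rw [tsum_const_smul'', h2, ← tsum_const_smul'', ← tsum_const_smul'']
  refine tsum_congr fun k => ?_
  rw [hJ, GPS.ft_acf hf hK]
  simp only [Complex.real_smul]
  push_cast
  ring
end
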